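/- arXiv:2102.09522 — 4 statements merged into one kernel-verified Lean document; each statement's English description precedes it below -/
import Mathlib

section
/- Let q ≥ 1 and 0 ≤ k ≤ 2q−1. Let H_q ≤ S_{2q} be the hyperoctahedral subgroup on the pairs P_i = {2i−1, 2i} (i = 1,…,q), with character L_q. Then the subspace { v ∈ Λ^k U_{2q} : g·v = L_q(g)·v for all g ∈ H_q } of the k-th exterior power of the standard representation of S_{2q} over ℚ has dimension 1 if k = q−1, and dimension 0 otherwise. -/
noncomputable section

/-- The sum-of-coordinates linear functional on `ℚ^N`. -/
def sumMap (N : ℕ) : (Fin N → ℚ) →ₗ[ℚ] ℚ := ∑ i, LinearMap.proj i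

/-- The standard representation `U_N = {x ∈ ℚ^N : ∑ x_i = 0}` of the symmetric group. -/
def U (N : ℕ) : Submodule ℚ (Fin N → ℚ) := LinearMap.ker (sumMap N)

lemma mem_U {N : ℕ} (x : Fin N → ℚ) : x ∈ U N ↔ ∑ i, x i = 0 := by
  simp [U, sumMap, LinearMap.mem_ker]

/-- The action of a permutation on `ℚ^N` by permuting coordinates. -/
def permMap (N : ℕ) (σ : Equiv.Perm (Fin N)) : (Fin N → ℚ) →ₗ[ℚ] (Fin N → ℚ) :=
  LinearMap.funLeft ℚ ℚ ⇑σ⁻¹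

lemma permMap_mem {N : ℕ} (σ : Equiv.Perm (Fin N)) {x : Fin N → ℚ} (hx : x ∈ U N) :
    permMap N σ x ∈ U N := by
  rw [mem_U] at hx ⊢
  simpa [permMap, LinearMap.funLeft_apply, Function.comp] using
    (Equiv.sum_comp σ⁻¹ x).trans hx

/-- The action of a permutation on the standard representation `U_N`. -/
def permU (N : ℕ) (σ : Equiv.Perm (Fin N)) : ↥(U N) →ₗ[ℚ] ↥(U N) :=
  (permMap N σ).restrict fun _ hx => permMap_mem σ hx

/-- The induced (diagonal) action on the exterior algebra of `U_N`; it preserves each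
exterior power `⋀[ℚ]^k U_N`. -/
def act (N : ℕ) (σ : Equiv.Perm (Fin N)) :
    ExteriorAlgebra ℚ ↥(U N) →ₗ[ℚ] ExteriorAlgebra ℚ ↥(U N) :=
  (ExteriorAlgebra.map (permU N σ)).toLinearMap

/-- The eigenspace of a linear endomorphism for the eigenvalue `c`. -/
def eigen {V : Type*} [AddCommGroup V] [Module ℚ V] (f : V →ₗ[ℚ] V) (c : ℚ) :
    Submodule ℚ V := LinearMap.ker (f - c • LinearMap.id)

/-- `g` belongs to the hyperoctahedral subgroup of `S_N` on the `q` pairs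
`{a+2i, a+2i+1}` (`0 ≤ i < q`), inducing the permutation `τ` on the set of pairs:
`g` fixes every letter outside the pairs, and sends the `i`-th pair to the `τ(i)`-th pair. -/
def IsHypAt (a : ℕ) {N q : ℕ} (g : Equiv.Perm (Fin N)) (τ : Equiv.Perm (Fin q)) : Prop :=
  (∀ i : Fin N, ((i : ℕ) < a ∨ a + 2*q ≤ (i : ℕ)) → g i = i) ∧
  ∀ i : Fin N, ∀ _h1 : a ≤ (i : ℕ), ∀ _h2 : (i : ℕ) < a + 2*q,
    ((g i : ℕ) - a)/2 = ((τ ⟨((i : ℕ) - a)/2, by omega⟩ : Fin q) : ℕ)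

end

/-!
On `U_{2q}` take as coordinates the half-differences of the `q` pairs and the means of all pairs but
one, the means having sum zero. The swap inside a pair negates one half-difference and fixes all
other coordinates, but acts by `1` on the isotypic subspace, so no half-difference contributes to an
element of it. If the mean of a pair `P_j` with `j ≠ 0` does not contribute either, exchanging `P_0`
and `P_j` fixes every coordinate involved but acts by `-1`. This leaves the wedge
`⋀_{i ≠ 0} (a_i - a_0)` of differences of indicator vectors of pairs, of degree `q - 1`. The group
acts on it through the determinant of the standard representation of `S_q`, which is the sign.
-/

namespace HyperoctahedralHook

open Module Set.powersetCard

section Alternating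

variable {R M N ι : Type*} [Ring R] [AddCommGroup M] [Module R M] [AddCommGroup N] [Module R N]

theorem alternatingMap_add_smul [Finite ι] (f : M [⋀^ι]→ₗ[R] N) (v : ι → M) (c : ι → R)
    {k : ι} (hk : c k = 0) : f (fun i => v i + c i • v k) = f v := by
  classical
  have := Fintype.ofFinite ι
  let w (t : Finset ι) : ι → M := t.piecewise (fun i => v i + c i • v k) v
  have hw (t : Finset ι) : w t k = v k := by by_cases h : k ∈ t <;> simp [w, h, hk]
  suffices h : ∀ t : Finset ι, f (w t) = f v by simpa [w] using h Finset.univ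
  intro t
  induction t using Finset.induction_on with
  | empty => simp [w]
  | insert j t hj ih =>
    have hwj : Function.update (w t) j (v j) = w t := by simp [w, hj]
    rcases eq_or_ne j k with rfl | hjk
    · simpa [w, Finset.piecewise_insert, hk, hwj] using ih
    · calc f (w (insert j t))
          = f (Function.update (w t) j (v j + c j • w t k)) := by
            rw [hw]; simp only [w, Finset.piecewise_insert]
        _ = f (w t) := by
            rw [f.map_update_add, f.map_update_smul, f.map_update_self _ hjk, smul_zero, add_zero,
              hwj]
        _ = f v := ih

theorem alternatingMap_sub_perm {n : ℕ} (f : M [⋀^Fin n]→ₗ[R] N) (x : Fin (n + 1) → M)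
    (τ : Equiv.Perm (Fin (n + 1))) :
    f (fun i => x (τ i.succ) - x (τ 0)) =
      Equiv.Perm.sign τ • f (fun i => x i.succ - x 0) := by
  obtain ⟨⟨p, e⟩, rfl⟩ := Equiv.Perm.decomposeFin.symm.surjective τ
  simp only [Equiv.Perm.decomposeFin_symm_apply_succ, Equiv.Perm.decomposeFin_symm_apply_zero,
    Equiv.Perm.decomposeFin.symm_sign]
  refine (f.map_perm (fun i => x (Equiv.swap 0 p i.succ) - x p) e).trans ?_
  cases p using Fin.cases with
  | zero => simp
  | succ k =>
    let v : Fin n → M := fun i => x i.succ - x 0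
    have hswap : (fun i => x (Equiv.swap 0 k.succ i.succ) - x k.succ) =
        fun i => Function.update v k (-v k) i +
          (if i = k then 0 else 1 : R) • Function.update v k (-v k) k := by
      funext i
      rcases eq_or_ne i k with rfl | hik
      · simp [v]
      · simp [v, hik, Equiv.swap_apply_of_ne_of_ne (Fin.succ_ne_zero i)]
    have hneg : f (fun i => x (Equiv.swap 0 k.succ i.succ) - x k.succ) = -f v := by
      rw [hswap, alternatingMap_add_smul f _ _ (if_pos rfl), f.map_update_neg,
        Function.update_eq_self]
    rw [hneg]
    simp [v, Fin.succ_ne_zero]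

end Alternating

section ExteriorPower

variable {R M I : Type*} [CommRing R] [AddCommGroup M] [Module R M] [LinearOrder I]

theorem repr_exteriorPower_map (b : Basis I R M) {k : ℕ} {f : M →ₗ[R] M} {ε : I → R}
    {s : Set.powersetCard I k} (h : ∀ i ∈ s, b.coord i ∘ₗ f = ε i • b.coord i) (v : ⋀[R]^k M) :
    (b.exteriorPower k).repr (exteriorPower.map k f v) s =
      (∏ i ∈ s.1, ε i) * (b.exteriorPower k).repr v s := by
  suffices H : exteriorPower.ιMultiDual R k b s ∘ₗ exteriorPower.map k f =
      (∏ i ∈ s.1, ε i) • exteriorPower.ιMultiDual R k b s by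
    simpa only [exteriorPower.basis_repr_apply, LinearMap.comp_apply, LinearMap.smul_apply,
      smul_eq_mul] using LinearMap.congr_fun H v
  have hprod : ∏ j, ε (ofFinEmbEquiv.symm s j) = ∏ i ∈ s.1, ε i := by
    rw [← Finset.map_orderEmbOfFin_univ s.1 s.2, Finset.prod_map]
    rfl
  ext x
  have hentry (i j : Fin k) : b.coord (ofFinEmbEquiv.symm s j) (f (x i)) =
      ε (ofFinEmbEquiv.symm s j) * b.coord (ofFinEmbEquiv.symm s j) (x i) :=
    LinearMap.congr_fun (h _ ((mem_range_ofFinEmbEquiv_symm_iff_mem s _).1 ⟨j, rfl⟩)) (x i)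
  simp only [LinearMap.compAlternatingMap_apply, LinearMap.comp_apply, LinearMap.smul_apply,
    exteriorPower.map_apply_ιMulti, exteriorPower.ιMultiDual_apply_ιMulti, Function.comp_apply,
    hentry, ← hprod, smul_eq_mul]
  exact Matrix.det_mul_row _ _

theorem repr_eq_zero_of_exteriorPower_map_eq_smul [IsDomain R] (b : Basis I R M) {k : ℕ}
    {f : M →ₗ[R] M} {ε : I → R} {s : Set.powersetCard I k}
    (h : ∀ i ∈ s, b.coord i ∘ₗ f = ε i • b.coord i) {c : R} (hc : c ≠ ∏ i ∈ s.1, ε i)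
    {v : ⋀[R]^k M} (hv : exteriorPower.map k f v = c • v) :
    (b.exteriorPower k).repr v s = 0 := by
  have hrepr := repr_exteriorPower_map b h v
  rw [hv, map_smul, Finsupp.smul_apply, smul_eq_mul] at hrepr
  exact (mul_eq_mul_right_iff.1 hrepr).resolve_left hc

theorem coe_exteriorPower_map {k : ℕ} (f : M →ₗ[R] M) (v : ⋀[R]^k M) :
    (exteriorPower.map k f v : ExteriorAlgebra R M) = ExteriorAlgebra.map f v := by
  have : (⋀[R]^k M).subtype ∘ₗ exteriorPower.map k f =
      (ExteriorAlgebra.map f).toLinearMap ∘ₗ (⋀[R]^k M).subtype := by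
    ext m
    simp [ExteriorAlgebra.map_apply_ιMulti]
  exact LinearMap.congr_fun this v

end ExteriorPower

section Pairs

variable {q : ℕ}

/-- The letter `2 * i + b` of `Fin (2 * q)`, seen as the `b`-th element of the `i`-th pair. -/
def letterEquiv (q : ℕ) : Fin q × Fin 2 ≃ Fin (2 * q) :=
  finProdFinEquiv.trans (finCongr (mul_comm q 2))

theorem val_letterEquiv (p : Fin q × Fin 2) : (letterEquiv q p : ℕ) = p.2 + 2 * p.1 := rfl

/-- `σ` permutes the pairs `{i} × Fin 2` among themselves according to `τ`: this is membership in
the hyperoctahedral group, with letters indexed by `letterEquiv`. -/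
def PermutesPairs (σ : Equiv.Perm (Fin q × Fin 2)) (τ : Equiv.Perm (Fin q)) : Prop :=
  ∀ p, (σ p).1 = τ p.1

theorem isHypAt_zero_permCongr_iff {σ : Equiv.Perm (Fin q × Fin 2)} {τ : Equiv.Perm (Fin q)} :
    IsHypAt 0 ((letterEquiv q).permCongr σ) τ ↔ PermutesPairs σ τ := by
  have hdiv (p : Fin q × Fin 2) : (letterEquiv q p : ℕ) / 2 = p.1 := by
    rw [val_letterEquiv]; omega
  refine ⟨fun h p => ?_, fun h => ⟨fun i hi => by omega, fun i _ _ => ?_⟩⟩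
  · simpa [hdiv, Fin.ext_iff] using h.2 (letterEquiv q p) (Nat.zero_le _) (by omega)
  · obtain ⟨p, rfl⟩ := (letterEquiv q).surjective i
    simp [hdiv, h p]

theorem permutesPairs_swap (i : Fin q) : PermutesPairs (Equiv.swap (i, 0) (i, 1)) 1 := by
  rintro ⟨j, b⟩
  rcases eq_or_ne j i with rfl | hji
  · fin_cases b <;> simp
  · simp [Equiv.swap_apply_of_ne_of_ne, hji]

theorem permutesPairs_prodCongr (τ : Equiv.Perm (Fin q)) :
    PermutesPairs (τ.prodCongr (Equiv.refl (Fin 2))) τ := fun _ => rfl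

/-- The action of `S_{2q}` on the standard representation `U_{2q}`, with letters indexed by
`letterEquiv`. -/
noncomputable def letterAction (σ : Equiv.Perm (Fin q × Fin 2)) : U (2 * q) →ₗ[ℚ] U (2 * q) :=
  permU (2 * q) ((letterEquiv q).permCongr σ)

theorem letterAction_apply (σ : Equiv.Perm (Fin q × Fin 2)) (u : U (2 * q)) (p : Fin q × Fin 2) :
    (letterAction σ u).1 (letterEquiv q p) = u.1 (letterEquiv q (σ.symm p)) :=
  congrArg (fun p => u.1 (letterEquiv q (σ.symm p))) ((letterEquiv q).symm_apply_apply p)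

/-- Half the sum of the two coordinates of the `i`-th pair. -/
noncomputable def pairMean (i : Fin q) : Dual ℚ (U (2 * q)) :=
  ((1 / 2 : ℚ) • (.proj (letterEquiv q (i, 0)) + .proj (letterEquiv q (i, 1))) :
    Dual ℚ (Fin (2 * q) → ℚ)) ∘ₗ (U (2 * q)).subtype

/-- Half the difference of the two coordinates of the `i`-th pair. -/
noncomputable def pairHalfDiff (i : Fin q) : Dual ℚ (U (2 * q)) :=
  ((1 / 2 : ℚ) • (.proj (letterEquiv q (i, 0)) - .proj (letterEquiv q (i, 1))) :
    Dual ℚ (Fin (2 * q) → ℚ)) ∘ₗ (U (2 * q)).subtype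

theorem pairMean_apply (i : Fin q) (u : U (2 * q)) :
    pairMean i u = (u.1 (letterEquiv q (i, 0)) + u.1 (letterEquiv q (i, 1))) / 2 :=
  one_div_mul_eq_div 2 _

theorem pairHalfDiff_apply (i : Fin q) (u : U (2 * q)) :
    pairHalfDiff i u = (u.1 (letterEquiv q (i, 0)) - u.1 (letterEquiv q (i, 1))) / 2 :=
  one_div_mul_eq_div 2 _

theorem sum_letterEquiv (x : Fin (2 * q) → ℚ) :
    ∑ y, x y = ∑ i, (x (letterEquiv q (i, 0)) + x (letterEquiv q (i, 1))) := by
  rw [← (letterEquiv q).sum_comp, Fintype.sum_prod_type]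
  simp only [Fin.sum_univ_two]

theorem sum_pairMean (u : U (2 * q)) : ∑ i, pairMean i u = 0 := by
  simp only [pairMean_apply, ← Finset.sum_div, ← sum_letterEquiv, (mem_U u.1).1 u.2, zero_div]

theorem pairMean_comp_letterAction_swap (i j : Fin q) :
    pairMean i ∘ₗ letterAction (Equiv.swap (j, 0) (j, 1)) = pairMean i := by
  ext u
  rcases eq_or_ne i j with rfl | hij
  · simp [pairMean_apply, letterAction_apply, add_comm]
  · simp [pairMean_apply, letterAction_apply, Equiv.swap_apply_of_ne_of_ne, hij]

theorem pairHalfDiff_comp_letterAction_swap (i j : Fin q) :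
    pairHalfDiff i ∘ₗ letterAction (Equiv.swap (j, 0) (j, 1)) =
      (if i = j then -1 else 1 : ℚ) • pairHalfDiff i := by
  ext u
  rcases eq_or_ne i j with rfl | hij
  · simp only [LinearMap.comp_apply, pairHalfDiff_apply, letterAction_apply, Equiv.symm_swap,
      Equiv.swap_apply_left, Equiv.swap_apply_right, if_true, LinearMap.smul_apply, smul_eq_mul]
    ring
  · simp [pairHalfDiff_apply, letterAction_apply, Equiv.swap_apply_of_ne_of_ne, hij]

theorem pairMean_comp_letterAction_prodCongr (τ : Equiv.Perm (Fin q)) (i : Fin q) :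
    pairMean i ∘ₗ letterAction (τ.prodCongr (Equiv.refl (Fin 2))) = pairMean (τ.symm i) := by
  ext u
  simp [pairMean_apply, letterAction_apply]

/-- The difference `a_i - a_j` of the indicator vectors of the `i`-th and `j`-th pairs. -/
noncomputable def pairIndicatorSub (i j : Fin q) : U (2 * q) :=
  ⟨fun y => (if ((letterEquiv q).symm y).1 = i then 1 else 0) -
      if ((letterEquiv q).symm y).1 = j then 1 else 0, by
    rw [mem_U, sum_letterEquiv]
    simp [Finset.sum_add_distrib, Finset.sum_sub_distrib]⟩

theorem pairIndicatorSub_apply (i j : Fin q) (p : Fin q × Fin 2) :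
    (pairIndicatorSub i j).1 (letterEquiv q p) =
      (if p.1 = i then 1 else 0) - if p.1 = j then 1 else 0 := by
  simp [pairIndicatorSub]

theorem pairIndicatorSub_sub_pairIndicatorSub (i j l : Fin q) :
    pairIndicatorSub i l - pairIndicatorSub j l = pairIndicatorSub i j := by
  ext y
  simp [pairIndicatorSub]

theorem pairMean_pairIndicatorSub (l i j : Fin q) :
    pairMean l (pairIndicatorSub i j) = (if l = i then 1 else 0) - if l = j then 1 else 0 := by
  simp only [pairMean_apply, pairIndicatorSub_apply]; ring

theorem pairHalfDiff_pairIndicatorSub (l i j : Fin q) :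
    pairHalfDiff l (pairIndicatorSub i j) = 0 := by
  simp only [pairHalfDiff_apply, pairIndicatorSub_apply]; ring

theorem letterAction_pairIndicatorSub {σ : Equiv.Perm (Fin q × Fin 2)} {τ : Equiv.Perm (Fin q)}
    (h : PermutesPairs σ τ) (i j : Fin q) :
    letterAction σ (pairIndicatorSub i j) = pairIndicatorSub (τ i) (τ j) := by
  ext y
  obtain ⟨p, rfl⟩ := (letterEquiv q).surjective y
  obtain ⟨p, rfl⟩ := σ.surjective p
  rw [letterAction_apply, Equiv.symm_apply_apply, pairIndicatorSub_apply, pairIndicatorSub_apply,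
    h p]
  simp only [τ.injective.eq_iff]

end Pairs

section Isotypic

/-- The subspace of `Λ^k U_{2q}` on which the hyperoctahedral group `H_q` acts through `L_q`. -/
noncomputable def signIsotypic (q k : ℕ) : Submodule ℚ (⋀[ℚ]^k (U (2 * q))) :=
  (⨅ (g : Equiv.Perm (Fin (2 * q))) (τ : Equiv.Perm (Fin q)) (_ : IsHypAt 0 g τ),
    eigen (act (2 * q) g) ((Equiv.Perm.sign τ : ℤ) : ℚ)).comap (⋀[ℚ]^k (U (2 * q))).subtype

theorem mem_signIsotypic_iff {q k : ℕ} {v : ⋀[ℚ]^k (U (2 * q))} :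
    v ∈ signIsotypic q k ↔ ∀ σ τ, PermutesPairs σ τ →
      exteriorPower.map k (letterAction σ) v = ((Equiv.Perm.sign τ : ℤ) : ℚ) • v := by
  simp only [signIsotypic, Submodule.mem_comap, Submodule.mem_iInf, eigen, LinearMap.mem_ker,
    LinearMap.sub_apply, LinearMap.smul_apply, LinearMap.id_apply, sub_eq_zero,
    ← isHypAt_zero_permCongr_iff, (letterEquiv q).permCongr.surjective.forall, Subtype.ext_iff,
    coe_exteriorPower_map]
  rfl

variable {n k : ℕ}

/-- The element of `U_{2(n+1)}` with prescribed half-differences `c (inl i)` for all `n + 1` pairs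
and prescribed means `c (inr j)` for all pairs but the first, whose mean is then forced. -/
def ofPairCoords (c : Fin (n + 1) ⊕ₗ Fin n → ℚ) : U (2 * (n + 1)) :=
  let mean : Fin (n + 1) → ℚ :=
    Fin.cons (-∑ j, c (toLex (Sum.inr j))) fun j => c (toLex (Sum.inr j))
  ⟨fun y =>
    let p := (letterEquiv (n + 1)).symm y
    mean p.1 + (if p.2 = 0 then 1 else -1) * c (toLex (Sum.inl p.1)), by
    simp [mem_U, sum_letterEquiv, Fin.sum_univ_succ, Finset.sum_add_distrib, mean]⟩

theorem pairMean_ofPairCoords_succ (c : Fin (n + 1) ⊕ₗ Fin n → ℚ) (j : Fin n) :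
    pairMean j.succ (ofPairCoords c) = c (toLex (Sum.inr j)) := by
  simp only [pairMean_apply, ofPairCoords, Equiv.symm_apply_apply, Fin.cons_succ, if_true,
    one_ne_zero, if_false]
  ring

theorem pairHalfDiff_ofPairCoords (c : Fin (n + 1) ⊕ₗ Fin n → ℚ) (i : Fin (n + 1)) :
    pairHalfDiff i (ofPairCoords c) = c (toLex (Sum.inl i)) := by
  simp [pairHalfDiff_apply, ofPairCoords]

/-- The coordinates on `U_{2(n+1)}`: all half-differences, and all means but the first. -/
noncomputable def pairCoord : Fin (n + 1) ⊕ₗ Fin n → Dual ℚ (U (2 * (n + 1))) :=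
  fun x => Sum.elim pairHalfDiff (fun j => pairMean j.succ) (ofLex x)

theorem ofPairCoords_pairCoord (u : U (2 * (n + 1))) :
    ofPairCoords (fun x => pairCoord x u) = u := by
  have hzero : pairMean 0 u = -∑ j : Fin n, pairMean j.succ u := by
    rw [eq_neg_iff_add_eq_zero, ← Fin.sum_univ_succ (fun i => pairMean i u), sum_pairMean]
  have hmean (i : Fin (n + 1)) : (Fin.cons (-∑ j : Fin n, pairMean j.succ u)
      (fun j : Fin n => pairMean j.succ u) : Fin (n + 1) → ℚ) i = pairMean i u := by
    cases i using Fin.cases <;> simp [hzero]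
  ext y
  obtain ⟨⟨i, b⟩, rfl⟩ := (letterEquiv (n + 1)).surjective y
  simp only [ofPairCoords, pairCoord, ofLex_toLex, Sum.elim_inl, Sum.elim_inr,
    Equiv.symm_apply_apply, hmean]
  rw [pairMean_apply, pairHalfDiff_apply]
  fin_cases b <;> simp only [Fin.zero_eta, Fin.mk_one, one_ne_zero, if_true, if_false] <;> ring

/-- The basis of `U_{2(n+1)}` dual to `pairCoord`. -/
noncomputable def pairBasis (n : ℕ) : Basis (Fin (n + 1) ⊕ₗ Fin n) ℚ (U (2 * (n + 1))) :=
  .ofEquivFun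
    { LinearMap.pi pairCoord with
      invFun := ofPairCoords
      left_inv := ofPairCoords_pairCoord
      right_inv := fun c => by
        ext x
        rcases x with i | j
        exacts [pairHalfDiff_ofPairCoords c i, pairMean_ofPairCoords_succ c j] }

theorem coord_pairBasis (x : Fin (n + 1) ⊕ₗ Fin n) : (pairBasis n).coord x = pairCoord x := rfl

theorem pairBasis_inr (j : Fin n) :
    pairBasis n (toLex (Sum.inr j)) = pairIndicatorSub j.succ 0 := by
  apply (pairBasis n).ext_elem
  intro x
  rw [Basis.repr_self, ← Basis.coord_apply, coord_pairBasis]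
  obtain ⟨i | i, rfl⟩ := toLex.surjective x
  · simp [pairCoord, pairHalfDiff_pairIndicatorSub]
  · simp [pairCoord, pairMean_pairIndicatorSub, Finsupp.single_apply, eq_comm]

theorem repr_eq_zero_of_inl_mem {v : ⋀[ℚ]^k (U (2 * (n + 1)))}
    (hv : v ∈ signIsotypic (n + 1) k) {s : Set.powersetCard (Fin (n + 1) ⊕ₗ Fin n) k}
    {i : Fin (n + 1)} (hi : toLex (Sum.inl i) ∈ s) :
    ((pairBasis n).exteriorPower k).repr v s = 0 := by
  let σ : Equiv.Perm (Fin (n + 1) × Fin 2) := Equiv.swap (i, 0) (i, 1)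
  let ε (x : Fin (n + 1) ⊕ₗ Fin n) : ℚ := if x = toLex (Sum.inl i) then -1 else 1
  have hcoord (x : Fin (n + 1) ⊕ₗ Fin n) :
      (pairBasis n).coord x ∘ₗ letterAction σ = ε x • (pairBasis n).coord x := by
    obtain ⟨j | j, rfl⟩ := toLex.surjective x
    · simp [coord_pairBasis, pairCoord, ε, σ, pairHalfDiff_comp_letterAction_swap]
    · simp [coord_pairBasis, pairCoord, ε, σ, pairMean_comp_letterAction_swap]
  have hneg : (∏ x ∈ s.1, ε x) = -1 := (Finset.prod_ite_eq' _ _ _).trans (if_pos hi)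
  refine repr_eq_zero_of_exteriorPower_map_eq_smul (pairBasis n) (fun x _ => hcoord x) ?_
    (mem_signIsotypic_iff.1 hv σ 1 (permutesPairs_swap i))
  rw [hneg, Equiv.Perm.sign_one]
  norm_num

theorem repr_eq_zero_of_inr_notMem {v : ⋀[ℚ]^k (U (2 * (n + 1)))}
    (hv : v ∈ signIsotypic (n + 1) k) {s : Set.powersetCard (Fin (n + 1) ⊕ₗ Fin n) k}
    (hs : ∀ i, toLex (Sum.inl i) ∉ s) {j : Fin n} (hj : toLex (Sum.inr j) ∉ s) :
    ((pairBasis n).exteriorPower k).repr v s = 0 := by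
  let τ : Equiv.Perm (Fin (n + 1)) := Equiv.swap 0 j.succ
  let σ : Equiv.Perm (Fin (n + 1) × Fin 2) := τ.prodCongr (Equiv.refl (Fin 2))
  have hcoord : ∀ x ∈ s,
      (pairBasis n).coord x ∘ₗ letterAction σ = (1 : ℚ) • (pairBasis n).coord x := by
    intro x hx
    obtain ⟨i | i, rfl⟩ := toLex.surjective x
    · exact absurd hx (hs i)
    · have hij : i.succ ≠ j.succ := fun h => hj (Fin.succ_injective n h ▸ hx)
      simp [coord_pairBasis, pairCoord, σ, τ, pairMean_comp_letterAction_prodCongr,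
        Equiv.swap_apply_of_ne_of_ne (Fin.succ_ne_zero i) hij]
  refine repr_eq_zero_of_exteriorPower_map_eq_smul (pairBasis n) hcoord ?_
    (mem_signIsotypic_iff.1 hv σ τ (permutesPairs_prodCongr τ))
  rw [Finset.prod_const_one, Equiv.Perm.sign_swap (Fin.succ_ne_zero j).symm]
  norm_num

/-- The indices in `pairBasis n` of the differences of indicator vectors of pairs. -/
def meanIndices (n : ℕ) : Set.powersetCard (Fin (n + 1) ⊕ₗ Fin n) n :=
  ofFinEmbEquiv (OrderEmbedding.ofStrictMono _ Sum.Lex.inr_strictMono)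

theorem mem_meanIndices_iff {x : Fin (n + 1) ⊕ₗ Fin n} :
    x ∈ meanIndices n ↔ ∃ j, toLex (Sum.inr j) = x := by
  simp [meanIndices]

theorem repr_eq_zero_of_ne_meanIndices {v : ⋀[ℚ]^k (U (2 * (n + 1)))}
    (hv : v ∈ signIsotypic (n + 1) k) {s : Set.powersetCard (Fin (n + 1) ⊕ₗ Fin n) k}
    (hs : s.1 ≠ (meanIndices n).1) : ((pairBasis n).exteriorPower k).repr v s = 0 := by
  by_contra hne
  have hinl (i : Fin (n + 1)) : toLex (Sum.inl i) ∉ s :=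
    fun hi => hne (repr_eq_zero_of_inl_mem hv hi)
  have hinr (j : Fin n) : toLex (Sum.inr j) ∈ s :=
    by_contra fun hj => hne (repr_eq_zero_of_inr_notMem hv hinl hj)
  refine hs (Finset.ext fun x => ?_)
  obtain ⟨i | j, rfl⟩ := toLex.surjective x
  · exact iff_of_false (hinl i) fun h => by simpa using mem_meanIndices_iff.1 h
  · exact iff_of_true (hinr j) (mem_meanIndices_iff.2 ⟨j, rfl⟩)

theorem exteriorPower_pairBasis_meanIndices :
    (pairBasis n).exteriorPower n (meanIndices n) =
      exteriorPower.ιMulti ℚ n fun i => pairIndicatorSub i.succ 0 := by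
  rw [exteriorPower.basis_apply, exteriorPower.ιMulti_family, meanIndices,
    Equiv.symm_apply_apply]
  exact congrArg _ (funext pairBasis_inr)

theorem exteriorPower_pairBasis_mem_signIsotypic :
    (pairBasis n).exteriorPower n (meanIndices n) ∈ signIsotypic (n + 1) n := by
  rw [mem_signIsotypic_iff]
  intro σ τ h
  have hperm := alternatingMap_sub_perm (exteriorPower.ιMulti ℚ n)
    (fun i : Fin (n + 1) => pairIndicatorSub i 0) τ
  simp only [pairIndicatorSub_sub_pairIndicatorSub] at hperm
  rw [exteriorPower_pairBasis_meanIndices, exteriorPower.map_apply_ιMulti]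
  simp only [Function.comp_def, letterAction_pairIndicatorSub h, hperm, Units.smul_def]
  exact (Int.cast_smul_eq_zsmul ℚ _ _).symm

theorem signIsotypic_eq_span :
    signIsotypic (n + 1) n = ℚ ∙ (pairBasis n).exteriorPower n (meanIndices n) := by
  refine le_antisymm (fun v hv => ?_)
    ((Submodule.span_singleton_le_iff_mem _ _).2 exteriorPower_pairBasis_mem_signIsotypic)
  rw [← Set.image_singleton, Basis.mem_span_image]
  intro s hs
  by_contra hne
  exact Finsupp.mem_support_iff.1 hs
    (repr_eq_zero_of_ne_meanIndices hv fun h => hne (Subtype.ext h))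

theorem signIsotypic_eq_bot (hk : k ≠ n) : signIsotypic (n + 1) k = ⊥ := by
  refine (Submodule.eq_bot_iff _).2 fun v hv => ((pairBasis n).exteriorPower k).ext_elem fun s => ?_
  rw [repr_eq_zero_of_ne_meanIndices hv, map_zero, Finsupp.zero_apply]
  exact fun h => hk (s.2.symm.trans ((congrArg Finset.card h).trans (meanIndices n).2))

end Isotypic

end HyperoctahedralHook

/-- Let `q ≥ 1` and `0 ≤ k ≤ 2q−1`.  The subspace of `Λ^k U_{2q}` of vectors `v`
with `g·v = L_q(g)·v` for all `g` in the hyperoctahedral subgroup `H_q ≤ S_{2q}` on the pairs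
`{2i−1, 2i}` has dimension `1` if `k = q−1` and `0` otherwise. -/
theorem stmt0 (q k : ℕ) (hq : 1 ≤ q) (hk : k ≤ 2*q - 1) :
    Module.finrank ℚ
      ↥((⋀[ℚ]^k ↥(U (2*q))) ⊓
        ⨅ (g : Equiv.Perm (Fin (2*q))) (τ : Equiv.Perm (Fin q)) (_ : IsHypAt 0 g τ),
          eigen (act (2*q) g) ((Equiv.Perm.sign τ : ℤ) : ℚ)) =
      if k = q - 1 then 1 else 0 := by
  obtain ⟨n, rfl⟩ := Nat.exists_eq_add_of_le' hq
  rw [← Submodule.map_comap_subtype, Submodule.finrank_map_subtype_eq, Nat.add_sub_cancel]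
  change Module.finrank ℚ (HyperoctahedralHook.signIsotypic (n + 1) k) = _
  split_ifs with h
  · subst h
    rw [HyperoctahedralHook.signIsotypic_eq_span, finrank_span_singleton]
    exact Module.Basis.ne_zero _ _
  · rw [HyperoctahedralHook.signIsotypic_eq_bot h, finrank_bot]
end

section
/- Let 2 ≤ r < n be integers and set N = n + r. Let H_{r−1} ≤ S_N be the hyperoctahedral subgroup on the pairs P_i = {2i−1, 2i} (i = 1,…,r−1), with character L_{r−1}. Then the subspace W = { v ∈ Λ^n U_N : g·v = L_{r−1}(g)·v for all g ∈ H_{r−1} } of Λ^n U_N is one-dimensional, and every permutation π ∈ S_N that fixes the letters 1,…,2r−2 pointwise acts on W by multiplication by sgn(π). (Equivalently: the restriction of the hook representation V_{r,1^n} of S_{n+r} to (S_2 ≀ S_{r−1}) × S_{n−r+2} contains a unique irreducible summand of the form L_{r−1} ⊠ V_β, namely L_{r−1} ⊠ V_{1^{n−r+2}}.) -/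
/-- The subspace `W = {v ∈ Λ^n U_{n+r} : g·v = L_{r−1}(g)·v for all g ∈ H_{r−1}}`, where
`H_{r−1} ≤ S_{n+r}` is the hyperoctahedral subgroup on the pairs `{2i−1, 2i}`, `i = 1,…,r−1`. -/
def Wsub (r n : ℕ) : Submodule ℚ (ExteriorAlgebra ℚ ↥(U (n+r))) :=
  (⋀[ℚ]^n ↥(U (n+r))) ⊓
    ⨅ (g : Equiv.Perm (Fin (n+r))) (τ : Equiv.Perm (Fin (r-1))) (_ : IsHypAt 0 g τ),
      eigen (act (n+r) g) ((Equiv.Perm.sign τ : ℤ) : ℚ)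

/-!
Put `q = r - 1` and `N = n + r`, and let `F ⊆ U_N` be the subspace of vectors that are constant on
each of the `q` pairs; it has dimension `(N - q) - 1 = n`. The claim is that `W = Λ^n F`.

The swap of a pair is a reflection, that is a transvection `x ↦ x + φ x • d` with `φ d = -2`. On the
exterior algebra a transvection acts by `ω ↦ ω + d ∧ (φ ⌋ ω)`, which is affine in `d`. So a
multivector fixed by all the swaps is still fixed after each `d` is replaced by `d / 2`, which turns
the product of the reflections into the projection of `U_N` onto `F`: it lies in `Λ^n F`.

Conversely, a permutation `g` that permutes the blocks (the pairs and the remaining single letters)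
acts on the line `Λ^n F` by its determinant on `F`. Functions on the blocks are an extension of the
trivial representation by `F`, so this determinant is the sign of `g` as a permutation of the
blocks: `L_q(g)` for `g ∈ H_q`, and `sgn g` if `g` fixes all letters of the pairs.
-/

open Function
open ExteriorAlgebra (ι)
open LinearMap (transvection funLeft)

section ExteriorAlgebra

variable {R M N : Type*} [CommRing R] [AddCommGroup M] [Module R M] [AddCommGroup N] [Module R N]

theorem exteriorAlgebra_map_transvection_apply (φ : Module.Dual R M) (d : M)
    (x : ExteriorAlgebra R M) :
    ExteriorAlgebra.map (transvection φ d) x =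
      x + ι R d * CliffordAlgebra.contractLeft φ x := by
  induction x using CliffordAlgebra.left_induction with
  | algebraMap r =>
    rw [CliffordAlgebra.contractLeft_algebraMap, mul_zero, add_zero]
    exact AlgHom.commutes _ r
  | add x y hx hy => rw [map_add, hx, hy, map_add, mul_add, add_add_add_comm]
  | ι_mul x v hx =>
    set y := CliffordAlgebra.contractLeft φ x
    have contract_mul : CliffordAlgebra.contractLeft φ (ι R v * x) = φ v • x - ι R v * y :=
      CliffordAlgebra.contractLeft_ι_mul φ v x
    have anticomm : ι R v * (ι R d * y) = -(ι R d * (ι R v * y)) := by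
      rw [← mul_assoc, eq_neg_of_add_eq_zero_left (ExteriorAlgebra.ι_add_mul_swap v d), neg_mul,
        mul_assoc]
    have square_zero : ι R d * (ι R d * y) = 0 := by
      rw [← mul_assoc, ExteriorAlgebra.ι_sq_zero, zero_mul]
    calc ExteriorAlgebra.map (transvection φ d) (ι R v * x)
        = (ι R v + φ v • ι R d) * (x + ι R d * y) := by
          rw [map_mul, ExteriorAlgebra.map_apply_ι, hx, transvection.apply, map_add, map_smul]
      _ = ι R v * x + ι R d * (φ v • x - ι R v * y) := by
          rw [add_mul, mul_add, mul_add, anticomm, smul_mul_assoc, smul_mul_assoc, square_zero,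
            smul_zero, mul_sub, mul_smul_comm]
          abel
      _ = ι R v * x + ι R d * CliffordAlgebra.contractLeft φ (ι R v * x) := by rw [contract_mul]

theorem exteriorAlgebra_map_transvection_smul_eq_self {φ : Module.Dual R M} {d : M}
    {x : ExteriorAlgebra R M} (hx : ExteriorAlgebra.map (transvection φ d) x = x) (c : R) :
    ExteriorAlgebra.map (transvection φ (c • d)) x = x := by
  rw [exteriorAlgebra_map_transvection_apply, add_eq_left] at hx ⊢
  rw [map_smul, smul_mul_assoc, hx, smul_zero]

theorem exteriorAlgebra_map_id_add_sum_smulRight_eq_self {J : Type*}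
    {φ : J → Module.Dual R M} {d : J → M} (hφd : Pairwise fun j k => φ j (d k) = 0)
    {x : ExteriorAlgebra R M} (hx : ∀ j, ExteriorAlgebra.map (transvection (φ j) (d j)) x = x)
    (s : Finset J) :
    ExteriorAlgebra.map (LinearMap.id + ∑ j ∈ s, (φ j).smulRight (d j)) x = x := by
  classical
  induction s using Finset.induction_on with
  | empty => simp
  | insert j s hj ih =>
    have hcomp : LinearMap.id + ∑ k ∈ insert j s, (φ k).smulRight (d k) =
        transvection (φ j) (d j) ∘ₗ (LinearMap.id + ∑ k ∈ s, (φ k).smulRight (d k)) := by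
      ext y
      have hφj : φ j ((LinearMap.id + ∑ k ∈ s, (φ k).smulRight (d k) : M →ₗ[R] M) y) = φ j y := by
        rw [LinearMap.add_apply, LinearMap.id_apply, LinearMap.sum_apply, map_add, map_sum,
          add_eq_left]
        refine Finset.sum_eq_zero fun k hk => ?_
        have horth : φ j (d k) = 0 := hφd (ne_of_mem_of_not_mem hk hj).symm
        rw [LinearMap.smulRight_apply, map_smul, horth, smul_zero]
      rw [LinearMap.comp_apply, transvection.apply, hφj, Finset.sum_insert hj]
      simp only [LinearMap.add_apply, LinearMap.smulRight_apply]
      abel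
    rw [hcomp, ← ExteriorAlgebra.map_comp_map, AlgHom.comp_apply, ih, hx]

theorem coe_exteriorPower_map (n : ℕ) (f : M →ₗ[R] N) (x : ⋀[R]^n M) :
    (exteriorPower.map n f x : ExteriorAlgebra R N) = ExteriorAlgebra.map f x := by
  suffices (⋀[R]^n N).subtype ∘ₗ exteriorPower.map n f =
      (ExteriorAlgebra.map f).toLinearMap ∘ₗ (⋀[R]^n M).subtype from LinearMap.congr_fun this x
  apply exteriorPower.linearMap_ext
  ext v
  simp [ExteriorAlgebra.map_apply_ιMulti, exteriorPower.map_apply_ιMulti]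

theorem mem_range_exteriorPower_map {n : ℕ} {P : M →ₗ[R] M} {E : N →ₗ[R] M}
    (hPE : LinearMap.range P ≤ LinearMap.range E) {x : ⋀[R]^n M}
    (hx : exteriorPower.map n P x = x) :
    x ∈ LinearMap.range (exteriorPower.map n E) := by
  let P' : M →ₗ[R] LinearMap.range E := P.codRestrict _ fun y => hPE ⟨y, rfl⟩
  obtain ⟨z, hz⟩ :=
    exteriorPower.map_surjective E.surjective_rangeRestrict (exteriorPower.map n P' x)
  refine ⟨z, ?_⟩
  calc exteriorPower.map n E z
      = exteriorPower.map n (LinearMap.range E).subtype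
          (exteriorPower.map n E.rangeRestrict z) := by
        rw [← LinearMap.comp_apply, ← exteriorPower.map_comp]; rfl
    _ = exteriorPower.map n P x := by
        rw [hz, ← LinearMap.comp_apply, ← exteriorPower.map_comp]; rfl
    _ = x := hx

theorem alternatingMap_apply_eq_basis_det_smul {I : Type*} [Fintype I] [DecidableEq I]
    (b : Module.Basis I R M) (F : M [⋀^I]→ₗ[R] N) (v : I → M) : F v = b.det v • F b := by
  suffices F = (LinearMap.toSpanSingleton R N (F b)).compAlternatingMap b.det from
    DFunLike.congr_fun this v
  refine b.ext_alternating fun σ hσ => ?_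
  let τ : Equiv.Perm I := Equiv.ofBijective σ (Finite.injective_iff_bijective.mp hσ)
  change F (⇑b ∘ τ) = b.det (⇑b ∘ τ) • F b
  rw [F.map_perm, b.det.map_perm, b.det_self, smul_assoc, one_smul]

theorem exteriorPower_map_eq_det_smul {n : ℕ} (b : Module.Basis (Fin n) R M) (f : M →ₗ[R] M)
    (x : ⋀[R]^n M) : exteriorPower.map n f x = LinearMap.det f • x := by
  suffices exteriorPower.map n f = LinearMap.det f • LinearMap.id from LinearMap.congr_fun this x
  apply exteriorPower.linearMap_ext
  ext1 v
  have h := alternatingMap_apply_eq_basis_det_smul b (exteriorPower.ιMulti R n)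
  change exteriorPower.map n f (exteriorPower.ιMulti R n v) =
    LinearMap.det f • exteriorPower.ιMulti R n v
  rw [exteriorPower.map_apply_ιMulti, h (f ∘ v), h v, b.det_comp, mul_smul]

end ExteriorAlgebra

section Determinant

theorem det_funLeft_perm {R K : Type*} [CommRing R] [Fintype K] [DecidableEq K]
    (ρ : Equiv.Perm K) : LinearMap.det (funLeft R R ρ) = (Equiv.Perm.sign ρ : ℤ) := by
  have htoMatrix : LinearMap.toMatrix' (funLeft R R ρ) = (1 : Matrix K K R).submatrix ρ id := by
    ext i j
    simp [LinearMap.toMatrix'_apply, LinearMap.funLeft_apply, Matrix.one_apply, Pi.single_apply]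
  rw [← LinearMap.det_toMatrix', htoMatrix, Matrix.det_permute, Matrix.det_one, mul_one]

theorem det_restrict_of_sub_mem {K V : Type*} [Field K] [AddCommGroup V] [Module K V]
    [FiniteDimensional K V] {f : V →ₗ[K] V} {p : Submodule K V} (hf : ∀ x ∈ p, f x ∈ p)
    (hsub : ∀ x, f x - x ∈ p) : LinearMap.det (f.restrict hf) = LinearMap.det f := by
  have hquot : p.mapQ p f hf = LinearMap.id :=
    p.linearMap_qext <| LinearMap.ext fun x => (Submodule.Quotient.eq p).mpr (hsub x)
  rw [LinearMap.det_eq_det_mul_det p f hf, hquot, LinearMap.det_id, mul_one]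

end Determinant

section Swap

variable {N : ℕ}

/-- The vector `e_a - e_b` of the standard representation `U_N`. -/
def rootVec (a b : Fin N) : U N :=
  ⟨Pi.single a 1 - Pi.single b 1, by rw [mem_U]; simp⟩

/-- The linear functional `x ↦ x_a - x_b` on the standard representation `U_N`. -/
def rootFunctional (a b : Fin N) : Module.Dual ℚ (U N) :=
  ((LinearMap.proj a : (Fin N → ℚ) →ₗ[ℚ] ℚ) - LinearMap.proj b) ∘ₗ (U N).subtype

theorem coe_rootVec_apply (a b i : Fin N) :
    (rootVec a b : Fin N → ℚ) i = (if i = a then 1 else 0) - if i = b then 1 else 0 := by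
  simp [rootVec, Pi.single_apply]

theorem rootFunctional_apply (a b : Fin N) (x : U N) :
    rootFunctional a b x = (x : Fin N → ℚ) a - (x : Fin N → ℚ) b := rfl

theorem permU_swap (a b : Fin N) :
    permU N (Equiv.swap a b) = transvection (rootFunctional a b) (rootVec b a) := by
  ext x i
  have hx : ∀ j, (x : Fin N → ℚ) (Equiv.swap a b j) = (x : Fin N → ℚ) j +
      ((x : Fin N → ℚ) a - (x : Fin N → ℚ) b) *
        ((if j = b then 1 else 0) - if j = a then 1 else 0) := by
    intro j
    rw [Equiv.swap_apply_def]
    split_ifs <;> simp_all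
  change (x : Fin N → ℚ) ((Equiv.swap a b)⁻¹ i) = _
  rw [Equiv.swap_inv, hx, transvection.apply, rootFunctional_apply]
  simp [coe_rootVec_apply]

end Swap

section Pullback

variable {N : ℕ} {K : Type*} (p : Fin N → K)

/-- The functions on `K` whose pullback along `p : Fin N → K` has sum zero. For surjective `p` this
is a model of the space of vectors of `U_N` that are constant on the fibres of `p`. -/
def fibreU : Submodule ℚ (K → ℚ) := LinearMap.ker (sumMap N ∘ₗ funLeft ℚ ℚ p)

/-- Pullback along `p : Fin N → K`, as a map into the standard representation `U_N`. -/
def pullbackU : fibreU p →ₗ[ℚ] U N := (funLeft ℚ ℚ p).restrict fun _ hy => hy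

variable {p}

theorem pullbackU_injective (hp : Surjective p) : Injective (pullbackU p) := fun _ _ h =>
  Subtype.ext (LinearMap.funLeft_injective_of_surjective ℚ ℚ p hp (congrArg Subtype.val h))

theorem mem_range_pullbackU {x : U N} :
    x ∈ LinearMap.range (pullbackU p) ↔ FactorsThrough (x : Fin N → ℚ) p := by
  rw [factorsThrough_iff]
  constructor
  · rintro ⟨y, rfl⟩
    exact ⟨y, rfl⟩
  · rintro ⟨y, hy⟩
    have hmem : y ∈ fibreU p := by
      change y ∘ p ∈ U N
      exact hy ▸ x.2
    exact ⟨⟨y, hmem⟩, Subtype.ext hy.symm⟩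

theorem finrank_fibreU_add_one [NeZero N] [Fintype K] :
    Module.finrank ℚ (fibreU p) + 1 = Fintype.card K := by
  have hne : sumMap N ∘ₗ funLeft ℚ ℚ p ≠ 0 := fun h => by
    simpa [sumMap, LinearMap.funLeft_apply, NeZero.ne] using LinearMap.congr_fun h 1
  rw [← Module.finrank_fintype_fun_eq_card ℚ]
  exact Module.Dual.finrank_ker_add_one_of_ne_zero hne

theorem permMap_funLeft {π : Equiv.Perm (Fin N)} {ρ : Equiv.Perm K} (h : Semiconj p π ρ)
    (y : K → ℚ) : permMap N π (funLeft ℚ ℚ p y) = funLeft ℚ ℚ p (funLeft ℚ ℚ ⇑ρ⁻¹ y) := by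
  have hinv : Semiconj p ⇑π⁻¹ ⇑ρ⁻¹ := h.inverses_right π.right_inv ρ.left_inv
  ext i
  exact congrArg y (hinv i)

theorem sumMap_permMap (π : Equiv.Perm (Fin N)) (x : Fin N → ℚ) :
    sumMap N (permMap N π x) = sumMap N x := by
  simpa [sumMap, permMap, LinearMap.funLeft_apply] using Equiv.sum_comp π⁻¹ x

theorem exists_det_eq_sign_and_permU_comp_pullbackU [Fintype K] [DecidableEq K]
    {π : Equiv.Perm (Fin N)} {ρ : Equiv.Perm K} (h : Semiconj p π ρ) :
    ∃ g : fibreU p →ₗ[ℚ] fibreU p, LinearMap.det g = (Equiv.Perm.sign ρ : ℤ) ∧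
      permU N π ∘ₗ pullbackU p = pullbackU p ∘ₗ g := by
  have hsub : ∀ y, funLeft ℚ ℚ ⇑ρ⁻¹ y - y ∈ fibreU p := fun y => by
    rw [fibreU, LinearMap.mem_ker, map_sub, LinearMap.comp_apply, ← permMap_funLeft h,
      sumMap_permMap, LinearMap.comp_apply, sub_self]
  have hmaps : ∀ y ∈ fibreU p, funLeft ℚ ℚ ⇑ρ⁻¹ y ∈ fibreU p := fun y hy =>
    (Submodule.sub_mem_iff_left _ hy).mp (hsub y)
  refine ⟨(funLeft ℚ ℚ ⇑ρ⁻¹).restrict hmaps, ?_, ?_⟩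
  · rw [det_restrict_of_sub_mem hmaps hsub, det_funLeft_perm, Equiv.Perm.sign_inv]
  · exact LinearMap.ext fun y => Subtype.ext (permMap_funLeft h y)

theorem act_coe_map_pullbackU {n : ℕ} [Fintype K] [DecidableEq K]
    (hn : Module.finrank ℚ (fibreU p) = n) {π : Equiv.Perm (Fin N)} {ρ : Equiv.Perm K}
    (h : Semiconj p π ρ) (x : ⋀[ℚ]^n (fibreU p)) :
    act N π (exteriorPower.map n (pullbackU p) x) =
      ((Equiv.Perm.sign ρ : ℤ) : ℚ) •
        (exteriorPower.map n (pullbackU p) x : ExteriorAlgebra ℚ (U N)) := by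
  obtain ⟨g, hdet, hg⟩ := exists_det_eq_sign_and_permU_comp_pullbackU h
  have hmap : exteriorPower.map n (permU N π) (exteriorPower.map n (pullbackU p) x) =
      ((Equiv.Perm.sign ρ : ℤ) : ℚ) • exteriorPower.map n (pullbackU p) x := by
    rw [← LinearMap.comp_apply, ← exteriorPower.map_comp, hg, exteriorPower.map_comp,
      LinearMap.comp_apply, exteriorPower_map_eq_det_smul (Module.finBasisOfFinrankEq ℚ _ hn),
      hdet, map_smul]
  rw [← Submodule.coe_smul, ← hmap, coe_exteriorPower_map n (permU N π)]
  rfl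

theorem mem_range_map_pullbackU_of_act_swap_eq_self {J : Type*} [Finite J]
    {a b : J → Fin N} (hab : Injective (Sum.elim a b))
    (hp : ∀ x : Fin N → ℚ, (∀ j, x (a j) = x (b j)) → FactorsThrough x p)
    {n : ℕ} {x : ⋀[ℚ]^n (U N)} (hx : ∀ j, act N (Equiv.swap (a j) (b j)) x = x) :
    x ∈ LinearMap.range (exteriorPower.map n (pullbackU p)) := by
  classical
  cases nonempty_fintype J
  rw [Sum.elim_injective] at hab
  obtain ⟨ha, hb, hne⟩ := hab
  let φ : J → Module.Dual ℚ (U N) := fun j => rootFunctional (a j) (b j)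
  let d : J → U N := fun j => (1 / 2 : ℚ) • rootVec (b j) (a j)
  have hφd : ∀ j k, φ j (d k) = if j = k then -1 else 0 := fun j k => by
    rw [map_smul, rootFunctional_apply, coe_rootVec_apply, coe_rootVec_apply]
    simp only [ha.eq_iff, hb.eq_iff, hne j k, (hne k j).symm, if_false]
    split_ifs <;> norm_num
  let P : U N →ₗ[ℚ] U N := LinearMap.id + ∑ j, (φ j).smulRight (d j)
  have hφP : ∀ j y, φ j (P y) = 0 := fun j y => by simp [P, hφd]
  have hPx : exteriorPower.map n P x = x := by
    refine Subtype.ext ((coe_exteriorPower_map n P x).trans ?_)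
    have horth : Pairwise fun j k => φ j (d k) = 0 := fun j k hjk => (hφd j k).trans (if_neg hjk)
    have hfix : ∀ j, ExteriorAlgebra.map (transvection (φ j) (d j)) x = x := fun j => by
      refine exteriorAlgebra_map_transvection_smul_eq_self ?_ (1 / 2)
      rw [← permU_swap]
      exact hx j
    exact exteriorAlgebra_map_id_add_sum_smulRight_eq_self horth hfix Finset.univ
  refine mem_range_exteriorPower_map ?_ hPx
  rintro _ ⟨y, rfl⟩
  exact mem_range_pullbackU.mpr (hp _ fun j => sub_eq_zero.mp (hφP j y))

end Pullback

section Block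

variable {N q : ℕ}

/-- The blocks of the partition of `Fin N` into the `q` pairs `{2j, 2j+1}` and singletons. -/
abbrev Block (N q : ℕ) : Type := Fin q ⊕ {i : Fin N // 2 * q ≤ (i : ℕ)}

/-- The block containing a given letter. -/
def block (N q : ℕ) (i : Fin N) : Block N q :=
  if h : (i : ℕ) < 2 * q then Sum.inl ⟨i / 2, by omega⟩ else Sum.inr ⟨i, by omega⟩

theorem block_of_lt {i : Fin N} (h : (i : ℕ) < 2 * q) :
    block N q i = Sum.inl ⟨i / 2, by omega⟩ := dif_pos h

theorem block_of_le {i : Fin N} (h : 2 * q ≤ (i : ℕ)) : block N q i = Sum.inr ⟨i, h⟩ :=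
  dif_neg h.not_gt

theorem card_block (hq : 2 * q ≤ N) : Fintype.card (Block N q) = N - q := by
  have hlt : Fintype.card {i : Fin N // (i : ℕ) < 2 * q} = 2 * q := by
    rw [Fintype.card_subtype, Fin.card_filter_val_lt, min_eq_right hq]
  have hle : Fintype.card {i : Fin N // 2 * q ≤ (i : ℕ)} = N - 2 * q := by
    simp_rw [← not_lt]
    rw [Fintype.card_subtype_compl, hlt, Fintype.card_fin]
  rw [Fintype.card_sum, Fintype.card_fin, hle]
  omega

/-- The smaller letter of the `j`-th pair. -/
def pairFst (hq : 2 * q ≤ N) (j : Fin q) : Fin N := ⟨2 * j, by omega⟩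

/-- The larger letter of the `j`-th pair. -/
def pairSnd (hq : 2 * q ≤ N) (j : Fin q) : Fin N := ⟨2 * j + 1, by omega⟩

theorem injective_sumElim_pair (hq : 2 * q ≤ N) :
    Injective (Sum.elim (pairFst hq) (pairSnd hq)) := by
  rw [Sum.elim_injective]
  refine ⟨fun j k h => ?_, fun j k h => ?_, fun j k h => ?_⟩ <;>
    simp only [pairFst, pairSnd, Fin.mk.injEq] at h <;> omega

theorem block_surjective (hq : 2 * q ≤ N) : Surjective (block N q) := by
  rintro (j | ⟨i, hi⟩)
  · refine ⟨pairFst hq j, ?_⟩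
    rw [block_of_lt (by simp only [pairFst]; omega)]
    simp [pairFst]
  · exact ⟨i, block_of_le hi⟩

theorem factorsThrough_block (hq : 2 * q ≤ N) {X : Type*} {x : Fin N → X}
    (hx : ∀ j, x (pairFst hq j) = x (pairSnd hq j)) : FactorsThrough x (block N q) := by
  have hfst : ∀ (i : Fin N) (hi : (i : ℕ) < 2 * q), x i = x (pairFst hq ⟨i / 2, by omega⟩) := by
    intro i hi
    rcases Nat.mod_two_eq_zero_or_one i with h | h
    · congr 1; ext; simp only [pairFst]; omega
    · rw [hx]; congr 1; ext; simp only [pairSnd]; omega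
  intro i k hik
  rcases lt_or_ge (i : ℕ) (2 * q) with hi | hi <;> rcases lt_or_ge (k : ℕ) (2 * q) with hk | hk
  · rw [block_of_lt hi, block_of_lt hk, Sum.inl.injEq] at hik
    rw [hfst i hi, hfst k hk, hik]
  · rw [block_of_lt hi, block_of_le hk] at hik
    cases hik
  · rw [block_of_le hi, block_of_lt hk] at hik
    cases hik
  · rw [block_of_le hi, block_of_le hk, Sum.inr.injEq, Subtype.mk.injEq] at hik
    rw [hik]

theorem isHypAt_swap_pair (hq : 2 * q ≤ N) (j : Fin q) :
    IsHypAt 0 (Equiv.swap (pairFst hq j) (pairSnd hq j)) (1 : Equiv.Perm (Fin q)) := by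
  constructor
  · intro i hi
    refine Equiv.swap_apply_of_ne_of_ne ?_ ?_ <;> rintro rfl <;>
      simp only [pairFst, pairSnd] at hi <;> omega
  · intro i _ _
    rw [Equiv.swap_apply_def]
    split_ifs with h h <;> simp only [h, pairFst, pairSnd, Equiv.Perm.one_apply] <;> omega

theorem IsHypAt.semiconj_block {g : Equiv.Perm (Fin N)} {τ : Equiv.Perm (Fin q)}
    (h : IsHypAt 0 g τ) : Semiconj (block N q) g (Equiv.Perm.sumCongr τ 1) := by
  intro i
  rcases lt_or_ge (i : ℕ) (2 * q) with hi | hi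
  · have hτ : (g i : ℕ) / 2 = τ ⟨i / 2, by omega⟩ := h.2 i (Nat.zero_le _) (by omega)
    rw [block_of_lt hi, block_of_lt (i := g i) (by omega)]
    exact congrArg Sum.inl (Fin.ext hτ)
  · rw [h.1 i (Or.inr (by omega)), block_of_le hi]
    rfl

theorem exists_sign_eq_and_semiconj_block {π : Equiv.Perm (Fin N)}
    (hπ : ∀ i : Fin N, (i : ℕ) < 2 * q → π i = i) :
    ∃ ρ : Equiv.Perm (Block N q),
      Equiv.Perm.sign ρ = Equiv.Perm.sign π ∧ Semiconj (block N q) π ρ := by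
  have hmem : ∀ i : Fin N, 2 * q ≤ (π i : ℕ) ↔ 2 * q ≤ (i : ℕ) := fun i => by
    rw [← not_lt, ← not_lt, not_iff_not]
    refine ⟨fun h => ?_, fun h => by rwa [hπ i h]⟩
    rwa [π.injective (hπ _ h)] at h
  refine ⟨Equiv.Perm.sumCongr 1 (π.subtypePerm hmem), ?_, fun i => ?_⟩
  · rw [Equiv.Perm.sign_sumCongr, map_one, one_mul, Equiv.Perm.sign_subtypePerm]
    exact fun i hi => not_lt.mp (mt (hπ i) hi)
  · rcases lt_or_ge (i : ℕ) (2 * q) with hi | hi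
    · rw [hπ i hi, block_of_lt hi]
      rfl
    · rw [block_of_le hi, block_of_le ((hmem i).mpr hi)]
      rfl

end Block

section Wsub

variable {r n : ℕ}

theorem mem_Wsub {v : ExteriorAlgebra ℚ (U (n + r))} :
    v ∈ Wsub r n ↔ v ∈ ⋀[ℚ]^n (U (n + r)) ∧
      ∀ (g : Equiv.Perm (Fin (n + r))) (τ : Equiv.Perm (Fin (r - 1))), IsHypAt 0 g τ →
        act (n + r) g v = ((Equiv.Perm.sign τ : ℤ) : ℚ) • v := by
  simp only [Wsub, eigen, Submodule.mem_inf, Submodule.mem_iInf, LinearMap.mem_ker,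
    LinearMap.sub_apply, LinearMap.smul_apply, LinearMap.id_apply, sub_eq_zero]

theorem finrank_fibreU_block (hr : 1 ≤ r) (hrn : r ≤ n + 2) :
    Module.finrank ℚ (fibreU (block (n + r) (r - 1))) = n := by
  have : NeZero (n + r) := ⟨by omega⟩
  have h := finrank_fibreU_add_one (p := block (n + r) (r - 1))
  rw [card_block (by omega)] at h
  omega

theorem Wsub_eq_range (hr : 1 ≤ r) (hrn : r ≤ n + 2) :
    Wsub r n = LinearMap.range ((⋀[ℚ]^n (U (n + r))).subtype ∘ₗ
      exteriorPower.map n (pullbackU (block (n + r) (r - 1)))) := by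
  have hq : 2 * (r - 1) ≤ n + r := by omega
  apply le_antisymm
  · intro v hv
    obtain ⟨hvn, hact⟩ := mem_Wsub.mp hv
    have hfix : ∀ j, act (n + r) (Equiv.swap (pairFst hq j) (pairSnd hq j)) v = v := fun j => by
      rw [hact _ 1 (isHypAt_swap_pair hq j), map_one, Units.val_one, Int.cast_one, one_smul]
    obtain ⟨x, hx⟩ := mem_range_map_pullbackU_of_act_swap_eq_self (x := ⟨v, hvn⟩)
      (injective_sumElim_pair hq) (fun _ => factorsThrough_block hq) hfix
    exact ⟨x, congrArg Subtype.val hx⟩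
  · rintro _ ⟨x, rfl⟩
    refine mem_Wsub.mpr ⟨Subtype.property _, fun g τ hg => ?_⟩
    have h := act_coe_map_pullbackU (finrank_fibreU_block hr hrn) hg.semiconj_block x
    rwa [Equiv.Perm.sign_sumCongr, map_one, mul_one] at h

theorem stmt1_general (hr : 1 ≤ r) (hrn : r ≤ n + 2) :
    Module.finrank ℚ (Wsub r n) = 1 ∧
    ∀ π : Equiv.Perm (Fin (n + r)), (∀ i : Fin (n + r), (i : ℕ) < 2 * (r - 1) → π i = i) →
      ∀ v ∈ Wsub r n, act (n + r) π v = ((Equiv.Perm.sign π : ℤ) : ℚ) • v := by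
  have hn := finrank_fibreU_block hr hrn
  rw [Wsub_eq_range hr hrn]
  constructor
  · have hsurj : Surjective (block (n + r) (r - 1)) := block_surjective (by omega)
    have hinj := exteriorPower.map_injective_field (n := n) (pullbackU_injective hsurj)
    rw [LinearMap.finrank_range_of_inj (Subtype.val_injective.comp hinj), exteriorPower.finrank_eq,
      hn, Nat.choose_self]
  · rintro π hπ _ ⟨x, rfl⟩
    obtain ⟨ρ, hsign, hρ⟩ := exists_sign_eq_and_semiconj_block hπ
    rw [← hsign]
    exact act_coe_map_pullbackU hn hρ x

end Wsub

/-- For `2 ≤ r < n`, the subspace `W ⊆ Λ^n U_{n+r}` above is one-dimensional,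
and every permutation `π ∈ S_{n+r}` fixing the letters `1,…,2r−2` pointwise acts on `W`
by multiplication by `sgn π`. -/
theorem stmt1 (r n : ℕ) (hr : 2 ≤ r) (hrn : r < n) :
    Module.finrank ℚ ↥(Wsub r n) = 1 ∧
    ∀ π : Equiv.Perm (Fin (n+r)), (∀ i : Fin (n+r), (i : ℕ) < 2*(r-1) → π i = i) →
      ∀ v ∈ Wsub r n, act (n+r) π v = ((Equiv.Perm.sign π : ℤ) : ℚ) • v := by
  exact stmt1_general (by omega) (by omega)
end

section
/- Let m, k, q be integers with q ≥ 1, 2q ≤ m, 0 ≤ k ≤ m−1 and q ≥ m−k. Let H_q ≤ S_m be the hyperoctahedral subgroup on the pairs P_i = {2i−1, 2i} (i = 1,…,q), with character L_q. Then the only vector v ∈ Λ^k U_m satisfying g·v = L_q(g)·v for all g ∈ H_q is v = 0. (In particular, for 2 ≤ r < n and q ≥ r, the restriction of the hook representation V_{r,1^n} of S_{n+r} to (S_2 ≀ S_q) × S_{n−2q+r} has no irreducible summand of the form L_q ⊠ −.) -/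
set_option synthInstance.maxHeartbeats 1000000
set_option maxHeartbeats 1000000

/-!
By the formula `Λ(id + f ⊗ d) v = v + d ∧ (f ⌋ v)`, the action of a transvection on the exterior
algebra is affine in `d`, so a vector fixed by the reflection `x ↦ x - f(x) d` is also fixed by the
projection `x ↦ x - f(x) d / 2` onto its mirror. On the kernel `(S_2)^q` of `H_q → S_q` the
character `L_q` is trivial, so `v` is fixed by the `q` reflections swapping the two letters of a
pair, whose roots are orthogonal. Hence `v` is fixed by the composite projection, whose rank is
`(m - 1) - q < k`, and this kills `Λ^k U_m`.
-/

section Transvection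

variable {R M : Type*} [CommRing R] [AddCommGroup M] [Module R M]

theorem exteriorAlgebra_map_transvection (f : Module.Dual R M) (d : M) (v : ExteriorAlgebra R M) :
    ExteriorAlgebra.map (LinearMap.transvection f d) v =
      v + ExteriorAlgebra.ι R d * CliffordAlgebra.contractLeft (Q := 0) f v := by
  induction v using CliffordAlgebra.left_induction with
  | algebraMap r =>
    rw [CliffordAlgebra.contractLeft_algebraMap, mul_zero, add_zero]
    exact AlgHom.commutes _ r
  | add x y hx hy =>
    rw [map_add, hx, hy, map_add, mul_add]
    abel
  | ι_mul b a hb =>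
    change ExteriorAlgebra.map _ (ExteriorAlgebra.ι R a * b) = ExteriorAlgebra.ι R a * b + _
    have hdd (c : ExteriorAlgebra R M) :
        ExteriorAlgebra.ι R d * (ExteriorAlgebra.ι R d * c) = 0 := by
      rw [← mul_assoc, ExteriorAlgebra.ι_sq_zero, zero_mul]
    have had (c : ExteriorAlgebra R M) : ExteriorAlgebra.ι R a * (ExteriorAlgebra.ι R d * c) =
        -(ExteriorAlgebra.ι R d * (ExteriorAlgebra.ι R a * c)) := by
      rw [← mul_assoc, ← mul_assoc, eq_neg_iff_add_eq_zero, ← add_mul,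
        ExteriorAlgebra.ι_add_mul_swap, zero_mul]
    rw [map_mul, ExteriorAlgebra.map_apply_ι, hb, LinearMap.transvection.apply, map_add, map_smul,
      CliffordAlgebra.contractLeft_ι_mul]
    change _ = _ + ExteriorAlgebra.ι R d * (f a • b - ExteriorAlgebra.ι R a * _)
    simp only [add_mul, mul_add, mul_sub, smul_mul_assoc, mul_smul_comm, hdd, had, smul_zero]
    abel

theorem exteriorAlgebra_map_transvection_smul_eq_self_s2 {f : Module.Dual R M} {d : M}
    {v : ExteriorAlgebra R M} (hv : ExteriorAlgebra.map (Module.preReflection d f) v = v) (c : R) :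
    ExteriorAlgebra.map (LinearMap.transvection f (c • d)) v = v := by
  have hneg : Module.preReflection d f = LinearMap.transvection f (-d) := by
    ext x
    rw [Module.preReflection_apply, LinearMap.transvection.apply, smul_neg, sub_eq_add_neg]
  have hd : ExteriorAlgebra.ι R d * CliffordAlgebra.contractLeft (Q := 0) f v = 0 := by
    simpa [hneg, exteriorAlgebra_map_transvection] using hv
  rw [exteriorAlgebra_map_transvection, map_smul, smul_mul_assoc, hd, smul_zero, add_zero]

theorem exists_exteriorAlgebra_map_eq_self_of_preReflection [Invertible (2 : R)] {ι : Type*}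
    {f : ι → Module.Dual R M} {d : ι → M} (hself : ∀ i, f i (d i) = 2)
    (horth : Pairwise fun i j => f i (d j) = 0) {v : ExteriorAlgebra R M}
    (hv : ∀ i, ExteriorAlgebra.map (Module.preReflection (d i) (f i)) v = v) (s : Finset ι) :
    ∃ P : M →ₗ[R] M, ExteriorAlgebra.map P v = v ∧ ∀ i ∈ s, P (d i) = 0 := by
  classical
  induction s using Finset.induction_on with
  | empty => exact ⟨LinearMap.id, by simp, by simp⟩
  | insert j s _ ih =>
    obtain ⟨P, hPv, hPd⟩ := ih
    -- The projection along `d j` onto the mirror `ker (f j)`.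
    let T : M →ₗ[R] M := LinearMap.transvection (f j) (-⅟(2 : R) • d j)
    have hTj : T (d j) = 0 := by
      simp [T, LinearMap.transvection.apply, hself, smul_smul]
    have hTi (i : ι) (hij : i ≠ j) : T (d i) = d i := by
      simp [T, LinearMap.transvection.apply, horth hij.symm]
    refine ⟨P ∘ₗ T, ?_, fun i hi => ?_⟩
    · rw [← ExteriorAlgebra.map_comp_map, AlgHom.comp_apply,
        exteriorAlgebra_map_transvection_smul_eq_self_s2 (hv j), hPv]
    · obtain rfl | hij := eq_or_ne i j
      · rw [LinearMap.comp_apply, hTj, map_zero]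
      · rw [LinearMap.comp_apply, hTi i hij, hPd i (Finset.mem_of_mem_insert_of_ne hi hij)]

end Transvection

section Vanishing

variable {K V : Type*} [Field K] [AddCommGroup V] [Module K V] [FiniteDimensional K V]

theorem exteriorAlgebra_map_eq_zero_of_finrank_range_lt {W : Type*} [AddCommGroup W] [Module K W]
    {P : V →ₗ[K] W} {k : ℕ} (hP : Module.finrank K (LinearMap.range P) < k)
    {v : ExteriorAlgebra K V} (hv : v ∈ ⋀[K]^k V) : ExteriorAlgebra.map P v = 0 := by
  suffices h : ⋀[K]^k V ≤ LinearMap.ker (ExteriorAlgebra.map P).toLinearMap from h hv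
  rw [← ExteriorAlgebra.ιMulti_span_fixedDegree, Submodule.span_le]
  rintro _ ⟨x, rfl⟩
  change ExteriorAlgebra.map P (ExteriorAlgebra.ιMulti K k x) = 0
  rw [ExteriorAlgebra.map_apply_ιMulti]
  refine AlternatingMap.map_linearDependent _ _ fun hx => hP.not_ge ?_
  have hx' : LinearIndependent K (P.rangeRestrict ∘ x) :=
    LinearIndependent.of_comp (LinearMap.range P).subtype hx
  simpa using hx'.fintype_card_le_finrank

theorem eq_zero_of_map_preReflection_eq_self [NeZero (2 : K)] {ι : Type*} [Fintype ι]
    {f : ι → Module.Dual K V} {d : ι → V} (hself : ∀ i, f i (d i) = 2)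
    (horth : Pairwise fun i j => f i (d j) = 0) {k : ℕ}
    (hk : Module.finrank K V < k + Fintype.card ι) {v : ExteriorAlgebra K V} (hv : v ∈ ⋀[K]^k V)
    (hfix : ∀ i, ExteriorAlgebra.map (Module.preReflection (d i) (f i)) v = v) : v = 0 := by
  let : Invertible (2 : K) := invertibleOfNonzero two_ne_zero
  obtain ⟨P, hPv, hPd⟩ :=
    exists_exteriorAlgebra_map_eq_self_of_preReflection hself horth hfix Finset.univ
  have hd : LinearIndependent K d :=
    .of_pairwise_dual_eq_zero_one d (fun i => (⅟2 : K) • f i)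
      (fun i j hij => by simp [horth hij]) (fun i => by simp [hself])
  have hker : Fintype.card ι ≤ Module.finrank K (LinearMap.ker P) := by
    rw [← finrank_span_eq_card hd]
    refine Submodule.finrank_mono (Submodule.span_le.2 ?_)
    rintro _ ⟨i, rfl⟩
    exact hPd i (Finset.mem_univ i)
  have hrank := P.finrank_range_add_finrank_ker
  rw [← hPv]
  exact exteriorAlgebra_map_eq_zero_of_finrank_range_lt (by omega) hv

end Vanishing

section StandardRepresentation

variable {m : ℕ}

/-- The root `e_a - e_b` of the standard representation; it spans the `-1`-eigenspace of the
transposition `(a b)` when `a ≠ b`. -/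
def root (a b : Fin m) : U m :=
  ⟨Pi.single a 1 - Pi.single b 1, by simp [mem_U]⟩

/-- The coroot `x ↦ x_a - x_b` on the standard representation, normalized to take the value `2`
on `root a b` when `a ≠ b`. -/
def coroot (a b : Fin m) : Module.Dual ℚ (U m) :=
  (LinearMap.proj (R := ℚ) (φ := fun _ => ℚ) a - LinearMap.proj b).domRestrict (U m)

theorem coroot_apply (a b : Fin m) (x : U m) : coroot a b x = x.1 a - x.1 b := rfl

theorem coroot_root_self {a b : Fin m} (hab : a ≠ b) : coroot a b (root a b) = 2 := by
  simpa [coroot_apply, root, hab, hab.symm] using one_add_one_eq_two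

theorem coroot_root_of_disjoint {a b c d : Fin m} (hac : a ≠ c) (had : a ≠ d) (hbc : b ≠ c)
    (hbd : b ≠ d) : coroot a b (root c d) = 0 := by
  simp [coroot_apply, root, hac, had, hbc, hbd]

theorem permU_swap_s2 (a b : Fin m) :
    permU m (Equiv.swap a b) = Module.preReflection (root a b) (coroot a b) := by
  ext x j
  have hj : (permU m (Equiv.swap a b) x).1 j = x.1 (Equiv.swap a b j) := by
    simp [permU, permMap, LinearMap.funLeft_apply]
  rw [hj, Module.preReflection_apply, coroot_apply, Equiv.swap_apply_def]
  simp only [root, Submodule.coe_sub, Submodule.coe_smul, Pi.sub_apply, Pi.smul_apply,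
    Pi.single_apply, smul_eq_mul]
  grind

theorem finrank_U_lt (hm : 0 < m) : Module.finrank ℚ (U m) < m := by
  have hne : U m ≠ ⊤ := fun h => by
    have hmem : Pi.single ⟨0, hm⟩ 1 ∈ U m := h ▸ Submodule.mem_top
    simp [mem_U] at hmem
  simpa using Submodule.finrank_lt hne

end StandardRepresentation

theorem injective_sumElim_two_mul {N q : ℕ} (h : 2 * q ≤ N) :
    Function.Injective (Sum.elim (fun i : Fin q => (⟨2 * i, by omega⟩ : Fin N))
      fun i : Fin q => ⟨2 * i + 1, by omega⟩) := by
  rintro (i | i) (j | j) hij <;>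
    simp only [Sum.elim_inl, Sum.elim_inr, Sum.inl.injEq, Sum.inr.injEq,
      reduceCtorEq, Fin.ext_iff] at hij ⊢ <;> omega

theorem isHypAt_swap {a N q i : ℕ} (hi : i < q) {x y : Fin N} (hx : (x : ℕ) = a + 2 * i)
    (hy : (y : ℕ) = a + 2 * i + 1) : IsHypAt a (Equiv.swap x y) (1 : Equiv.Perm (Fin q)) := by
  constructor
  · intro j hj
    apply Equiv.swap_apply_of_ne_of_ne <;> rintro rfl <;> omega
  · intro j _ _
    rw [Equiv.swap_apply_def, Equiv.Perm.one_apply]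
    split_ifs with hjx hjy
    · subst hjx; dsimp only; omega
    · subst hjy; dsimp only; omega
    · rfl

theorem stmt2_general {ι : Type*} [Fintype ι] {m k : ℕ} (hm : 0 < m) (hk : m ≤ k + Fintype.card ι)
    {a b : ι → Fin m} (hab : Function.Injective (Sum.elim a b)) {v : ExteriorAlgebra ℚ (U m)}
    (hv : v ∈ ⋀[ℚ]^k (U m)) (hfix : ∀ i, act m (Equiv.swap (a i) (b i)) v = v) : v = 0 := by
  refine eq_zero_of_map_preReflection_eq_self (f := fun i => coroot (a i) (b i))
    (d := fun i => root (a i) (b i)) (fun i => coroot_root_self ?_) (fun i j hij => ?_)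
    ((finrank_U_lt hm).trans_le hk) hv fun i => ?_
  · exact hab.ne Sum.inl_ne_inr
  · exact coroot_root_of_disjoint (hab.ne (Sum.inl_injective.ne hij)) (hab.ne Sum.inl_ne_inr)
      (hab.ne Sum.inr_ne_inl) (hab.ne (Sum.inr_injective.ne hij))
  · rw [← permU_swap_s2]
    exact hfix i

/-- Let `m, k, q` be integers with `q ≥ 1`, `2q ≤ m`, `0 ≤ k ≤ m−1` and
`q ≥ m−k`.  The only vector `v ∈ Λ^k U_m` satisfying `g·v = L_q(g)·v` for all `g` in the
hyperoctahedral subgroup `H_q ≤ S_m` on the pairs `{2i−1, 2i}` is `v = 0`. -/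
theorem stmt2 (m k q : ℕ) (hq : 1 ≤ q) (h2q : 2*q ≤ m) (hk : k ≤ m - 1) (hqk : m - k ≤ q)
    (v : ExteriorAlgebra ℚ ↥(U m)) (hv : v ∈ ⋀[ℚ]^k ↥(U m))
    (heig : ∀ (g : Equiv.Perm (Fin m)) (τ : Equiv.Perm (Fin q)), IsHypAt 0 g τ →
      act m g v = ((Equiv.Perm.sign τ : ℤ) : ℚ) • v) :
    v = 0 := by
  have hcard : m ≤ k + Fintype.card (Fin q) := by rw [Fintype.card_fin]; omega
  exact stmt2_general (by omega) hcard (injective_sumElim_two_mul h2q) hv fun i => by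
    simpa using heig _ 1 (isHypAt_swap i.isLt (by simp) (by simp))
end

section
/- Let t ≥ 2 and j ≥ 1, let G = S_{t+2j}, and set z = (1 + (1 t+1) + (2 t+1) + ⋯ + (t t+1)) · y ∈ ℚ[G]. Then every homomorphism of left ℚ[G]-modules φ : ℚ[G]·y → Λ^{2j} U_{t+2j} satisfies φ(z) = 0; moreover, if φ is surjective then ker φ = ℚ[G]·z (the spanned submodule of the G-orbit of z). (This is the abstract form of the relation ∑_{i=1}^{t+1} (i t+1)(m_t ∘_e α_{2j+1}) = 0 in Lie graph homology.) -/
noncomputable section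

set_option synthInstance.maxHeartbeats 1000000
set_option maxHeartbeats 1000000

/-- `y = (∑_{σ ∈ S_{1,…,t}} σ) · (∑_{τ ∈ S_{t+1,…,t+2j}} sgn(τ) τ)` in the group algebra
`ℚ[S_{t+2j}]`, where `S_A` is the subgroup of permutations fixing every letter outside `A`. -/
def yElt (t j : ℕ) : MonoidAlgebra ℚ (Equiv.Perm (Fin (t + 2*j))) :=
  (∑ σ ∈ Finset.univ.filter
      (fun σ : Equiv.Perm (Fin (t + 2*j)) => ∀ i : Fin (t + 2*j), t ≤ (i : ℕ) → σ i = i),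
    MonoidAlgebra.of ℚ _ σ) *
  (∑ τ ∈ Finset.univ.filter
      (fun τ : Equiv.Perm (Fin (t + 2*j)) => ∀ i : Fin (t + 2*j), (i : ℕ) < t → τ i = i),
    ((Equiv.Perm.sign τ : ℤ) : ℚ) • MonoidAlgebra.of ℚ _ τ)

/-- `z = (1 + (1 t+1) + (2 t+1) + ⋯ + (t t+1)) · y` in `ℚ[S_{t+2j}]`. -/
def zElt (t j : ℕ) (hj : 1 ≤ j) : MonoidAlgebra ℚ (Equiv.Perm (Fin (t + 2*j))) :=
  (1 + ∑ i : Fin t, MonoidAlgebra.of ℚ _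
      (Equiv.swap (Fin.castLE (by omega) i) (⟨t, by omega⟩ : Fin (t + 2*j)))) * yElt t j

end

noncomputable section

/-!
The element `z` is fixed by left multiplication by every permutation of `B = {1, …, t + 1}`: it is
`y` summed over the cosets of `S_t` in `S_B`. But `Λ^{2j} U` has no nonzero `S_B`-invariant: with
`c ∈ B`, it is spanned by wedges of `2j` distinct vectors `e_a - e_c`, and as only `2j - 1` letters
lie outside `B`, some `a` lies in `B`; the transposition `(a c)` then negates the wedge. So
averaging over `S_B` is zero on `Λ^{2j} U`, and `φ z = 0`.

For the kernel, up to sign `g * y` depends only on the set `g s`, where `s` is the set of the last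
`2j` letters. Modulo `ℚ[G] z`, an element with a given letter in `g s` is minus the sum of those in
which this letter is exchanged for one outside `g s`. Fixing a letter, `ℚ[G] y / ℚ[G] z` is
therefore spanned by one element for each `2j`-subset of the other `t + 2j - 1` letters; as there
are `dim Λ^{2j} U` such subsets, no room is left for a kernel larger than `ℚ[G] z`.
-/

section

open Equiv (Perm swap)
open scoped Finset Pointwise

section LinearAlgebra

variable {K V W : Type*} [DivisionRing K] [AddCommGroup V] [Module K V] [AddCommGroup W]
  [Module K W]

theorem finrank_span_image_le_card {ι κ : Type*} (f : ι → V) (π : ι → κ) {A : Set ι}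
    {T : Finset κ} (hT : Set.MapsTo π A T)
    (hf : ∀ i ∈ A, ∀ j ∈ A, π i = π j → f i ∈ Submodule.span K {f j}) :
    Module.finrank K (Submodule.span K (f '' A)) ≤ #T := by
  classical
  obtain ⟨R, hRA, hR⟩ := Set.exists_subset_bijOn A π
  have hRT : Set.MapsTo π R T := fun i hi => hT (hRA hi)
  have hRfin : R.Finite := .of_injOn hRT hR.injOn T.finite_toSet
  lift R to Finset ι using hRfin
  have hspan : Submodule.span K (f '' A) ≤ Submodule.span K (R.image f) := by
    rw [Submodule.span_le, Set.image_subset_iff]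
    intro i hi
    obtain ⟨j, hjR, hji⟩ := hR.surjOn (Set.mem_image_of_mem π hi)
    refine Submodule.span_mono ?_ (hf i hi j (hRA hjR) hji.symm)
    simpa using ⟨j, hjR, rfl⟩
  calc Module.finrank K (Submodule.span K (f '' A))
      ≤ Module.finrank K (Submodule.span K (R.image f : Set V)) := Submodule.finrank_mono hspan
    _ ≤ #(R.image f) := finrank_span_finset_le_card _
    _ ≤ #R := Finset.card_image_le
    _ ≤ #T := Finset.card_le_card_of_injOn π hRT hR.injOn

theorem eq_ker_of_surjective_of_finrank_le [FiniteDimensional K V] {f : V →ₗ[K] W}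
    (hf : Function.Surjective f) {N : Submodule K V} (hN : N ≤ LinearMap.ker f)
    (hdim : Module.finrank K V ≤ Module.finrank K W + Module.finrank K N) :
    N = LinearMap.ker f := by
  have hrank := f.finrank_range_add_finrank_ker
  rw [LinearMap.range_eq_top.2 hf, finrank_top] at hrank
  exact Submodule.eq_of_le_of_finrank_le hN (by omega)

theorem alternatingMap_update_add_smul {R M N ι : Type*} [CommRing R] [AddCommGroup M] [Module R M]
    [AddCommGroup N] [Module R N] [Finite ι] [DecidableEq ι] (f : M [⋀^ι]→ₗ[R] N) (v : ι → M)
    (r : ι → R) (p : ι) (x : M) :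
    f (Function.update (fun q => v q + r q • x) p x) = f (Function.update v p x) := by
  have := Fintype.ofFinite ι
  -- Adding the multiples of `x` one slot at a time never changes the value, as slot `p` holds `x`.
  let w (S : Finset ι) : ι → M := Function.update (fun q => v q + if q ∈ S then r q • x else 0) p x
  suffices h : ∀ S, f (w S) = f (Function.update v p x) by simpa [w] using h Finset.univ
  intro S
  induction S using Finset.induction_on with
  | empty => simp [w]
  | insert a S ha ih =>
    rw [← ih]
    rcases eq_or_ne a p with rfl | hap
    · congr 1
      ext q
      rcases eq_or_ne q a with rfl | hq <;> simp [w, *]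
    · have hw : w (insert a S) = Function.update (w S) a (w S a + r a • w S p) := by
        ext q
        rcases eq_or_ne q p with rfl | hqp
        · simp [w, hap.symm]
        rcases eq_or_ne q a with rfl | hqa <;> simp [w, *]
      rw [hw, f.map_update_add, f.map_update_smul, f.map_update_self _ hap, smul_zero, add_zero,
        Function.update_eq_self]

end LinearAlgebra

section Representation

theorem disjoint_invariants_span_of_forall_exists_neg {K G V : Type*} [Field K] [CharZero K]
    [Group G] [Finite G] [AddCommGroup V] [Module K V] (ρ : Representation K G V) {X : Set V}
    (hX : ∀ v ∈ X, ∃ g, ρ g v = -v) :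
    Disjoint ρ.invariants (Submodule.span K X) := by
  have := Fintype.ofFinite G
  have : Invertible (Fintype.card G : K) := invertibleOfNonzero (by simp)
  have hρ (g : G) (v : V) : ρ.averageMap (ρ g v) = ρ.averageMap v := by
    rw [Representation.averageMap, ← Representation.asAlgebraHom_single_one,
      ← Module.End.mul_apply, ← map_mul, GroupAlgebra.mul_average_right]
  have hker : Submodule.span K X ≤ LinearMap.ker ρ.averageMap := by
    refine Submodule.span_le.2 fun v hv => ?_
    obtain ⟨g, hg⟩ := hX v hv
    have hneg : ρ.averageMap v = -ρ.averageMap v := by rw [← map_neg, ← hg, hρ]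
    have := IsAddTorsionFree.of_isTorsionFree K V
    exact self_eq_neg.1 hneg
  rw [Submodule.disjoint_def]
  intro v hinv hspan
  rw [← ρ.averageMap_id v hinv]
  exact hker hspan

variable {R G V : Type*} [CommRing R] [Monoid G] [AddCommGroup V] [Module R V]

/-- The diagonal action on the exterior algebra induced by a representation. It preserves each
exterior power. -/
def exteriorRep (ρ : Representation R G V) : Representation R G (ExteriorAlgebra R V) where
  toFun g := (ExteriorAlgebra.map (ρ g)).toLinearMap
  map_one' := by
    rw [map_one]
    exact congrArg AlgHom.toLinearMap ExteriorAlgebra.map_id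
  map_mul' g h := by
    rw [map_mul]
    exact congrArg AlgHom.toLinearMap (ExteriorAlgebra.map_comp_map (ρ h) (ρ g)).symm

theorem exteriorRep_ιMulti (ρ : Representation R G V) (g : G) {k : ℕ} (v : Fin k → V) :
    exteriorRep ρ g (ExteriorAlgebra.ιMulti R k v) =
      ExteriorAlgebra.ιMulti R k (ρ g ∘ v) :=
  ExteriorAlgebra.map_apply_ιMulti _ _

theorem map_mul_eq_asAlgebraHom {I : Ideal (MonoidAlgebra R G)} (f : I →ₗ[R] V)
    (ρ : Representation R G V)
    (hf : ∀ g x (hx : x ∈ I),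
      f ⟨MonoidAlgebra.of R G g * x, I.mul_mem_left _ hx⟩ = ρ g (f ⟨x, hx⟩))
    (a : MonoidAlgebra R G) {x : MonoidAlgebra R G} (hx : x ∈ I) :
    f ⟨a * x, I.mul_mem_left a hx⟩ = ρ.asAlgebraHom a (f ⟨x, hx⟩) := by
  induction a using MonoidAlgebra.induction_on with
  | of g => rw [hf, Representation.asAlgebraHom_of]
  | add a b ha hb =>
    rw [map_add, LinearMap.add_apply, ← ha, ← hb, ← map_add]
    exact congrArg f (Subtype.ext (add_mul a b x))
  | smul r a ha =>
    rw [map_smul, LinearMap.smul_apply, ← ha, ← map_smul]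
    exact congrArg f (Subtype.ext (smul_mul_assoc r a x))

end Representation

section StandardRepresentation

variable (R α : Type*) [CommRing R] [Fintype α]

/-- The space of vectors with coordinate sum zero, carrying the standard representation of
`Perm α`. -/
def sumZero : Submodule R (α → R) := LinearMap.ker (∑ i, LinearMap.proj i)

variable {R α}

theorem mem_sumZero {x : α → R} : x ∈ sumZero R α ↔ ∑ i, x i = 0 := by
  simp [sumZero]

variable (R α) in
/-- The standard representation of `Perm α`: `σ` moves the `i`-th coordinate to position `σ i`. -/
def stdRep : Representation R (Perm α) (sumZero R α) where
  toFun σ := (LinearMap.funLeft R R ⇑σ⁻¹).restrict fun x hx => by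
    rw [mem_sumZero] at hx ⊢
    exact (Equiv.sum_comp σ⁻¹ x).trans hx
  map_one' := rfl
  map_mul' _ _ := rfl

section

variable [DecidableEq α]

variable (R) in
/-- The difference `e_i - e_c` of standard basis vectors; for fixed `c` these span `sumZero R α`. -/
def diffVec (c i : α) : sumZero R α :=
  ⟨Pi.single i 1 - Pi.single c 1, by simp [mem_sumZero]⟩

theorem stdRep_diffVec (σ : Perm α) (c i : α) :
    stdRep R α σ (diffVec R c i) = diffVec R (σ c) (σ i) := by
  ext k
  simp [stdRep, diffVec, LinearMap.funLeft_apply, Pi.single_apply, Equiv.symm_apply_eq]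

@[simp]
theorem diffVec_self (c : α) : diffVec R c c = 0 := by
  simp [diffVec]

theorem neg_diffVec (c i : α) : -diffVec R c i = diffVec R i c :=
  Subtype.ext (neg_sub _ _)

theorem diffVec_sub_diffVec (c i j : α) : diffVec R c i - diffVec R c j = diffVec R j i := by
  ext k
  simp [diffVec]

theorem span_range_diffVec (c : α) : Submodule.span R (Set.range (diffVec R c)) = ⊤ := by
  refine eq_top_iff.2 fun x _ => ?_
  have hx : x = ∑ i, x.1 i • diffVec R c i := by
    ext k
    simp [diffVec, mul_sub, Finset.sum_sub_distrib, mem_sumZero.1 x.2,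
      Pi.single_apply]
  rw [hx]
  exact Submodule.sum_mem _ fun i _ => Submodule.smul_mem _ _ (Submodule.subset_span ⟨i, rfl⟩)

theorem exteriorRep_swap_ιMulti_diffVec {k : ℕ} {c : α} {a : Fin k → α}
    (ha : Function.Injective a) (hc : ∀ q, a q ≠ c) (p : Fin k) :
    exteriorRep (stdRep R α) (swap (a p) c) (ExteriorAlgebra.ιMulti R k (diffVec R c ∘ a)) =
      -ExteriorAlgebra.ιMulti R k (diffVec R c ∘ a) := by
  set v := diffVec R c ∘ a with hv
  have hswap : stdRep R α (swap (a p) c) ∘ v =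
      Function.update (fun q => v q + (1 : R) • -v p) p (-v p) := by
    ext1 q
    rcases eq_or_ne q p with rfl | hq
    · simp [hv, stdRep_diffVec, neg_diffVec]
    · have hfix : swap (a p) c (a q) = a q := Equiv.swap_apply_of_ne_of_ne (ha.ne hq) (hc q)
      simp [hv, stdRep_diffVec, hfix, hq, ← sub_eq_add_neg, diffVec_sub_diffVec]
  rw [exteriorRep_ιMulti, hswap, alternatingMap_update_add_smul, AlternatingMap.map_update_neg,
    Function.update_eq_self]

end

theorem finrank_sumZero {K : Type*} [Field K] [Nonempty α] :
    Module.finrank K (sumZero K α) = Fintype.card α - 1 := by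
  classical
  have hne : (∑ i, LinearMap.proj i : (α → K) →ₗ[K] K) ≠ 0 := fun h => by
    simpa using LinearMap.congr_fun h (Pi.single (Classical.arbitrary α) 1)
  rw [sumZero, ← Module.finrank_fintype_fun_eq_card K,
    ← Module.Dual.finrank_ker_add_one_of_ne_zero hne, Nat.add_sub_cancel]

theorem disjoint_invariants_exteriorPower {K : Type*} [Field K] [CharZero K] {C : Finset α}
    {c : α} (hc : c ∉ C) {k : ℕ} (hk : #C < k) :
    Disjoint (Representation.invariants ((exteriorRep (stdRep K α)).comp
      (fixingSubgroup (Perm α) (C : Set α)).subtype)) (⋀[K]^k (sumZero K α)) := by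
  classical
  rw [← exteriorPower.ιMulti_span_fixedDegree_of_span_eq_top K k _ (span_range_diffVec c)]
  refine disjoint_invariants_span_of_forall_exists_neg _ ?_
  rintro _ ⟨v, hv, rfl⟩
  obtain ⟨a, rfl⟩ := Set.range_subset_range_iff_exists_comp.1 hv
  by_cases hzero : ExteriorAlgebra.ιMulti K k (diffVec K c ∘ a) = 0
  · exact ⟨1, by simp [hzero]⟩
  have ha : Function.Injective a := by
    by_contra h
    exact hzero (ExteriorAlgebra.ιMulti_eq_zero_of_not_inj fun hinj => h hinj.of_comp)
  have hac (q : Fin k) : a q ≠ c := fun hq =>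
    hzero (AlternatingMap.map_coord_zero _ q (by simp [hq]))
  obtain ⟨p, hp⟩ : ∃ p, a p ∉ C := by
    by_contra! h
    exact hk.not_ge (by
      simpa using Finset.card_le_card_of_injOn (s := Finset.univ) a (fun q _ => h q) ha.injOn)
  have hfix : swap (a p) c ∈ fixingSubgroup (Perm α) (C : Set α) := by
    refine (mem_fixingSubgroup_iff _).2 fun i hi => Equiv.swap_apply_of_ne_of_ne ?_ ?_
    · exact fun h => hp (h ▸ hi)
    · exact fun h => hc (h ▸ hi)
  exact ⟨⟨_, hfix⟩, exteriorRep_swap_ιMulti_diffVec ha hac p⟩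

end StandardRepresentation

section SignedSum

variable (R : Type*) [Ring R] {G : Type*} [Group G] [Fintype G]

open Classical in
/-- The sum of `χ h • h` over `h ∈ H` in the group algebra, for a sign character `χ`: for symmetric
groups, the symmetrizer (`χ = 1`) or antisymmetrizer (`χ = Perm.sign`) of a Young subgroup. -/
def signedSum (χ : G →* ℤˣ) (H : Subgroup G) : MonoidAlgebra R G :=
  ∑ h with h ∈ H, χ h • MonoidAlgebra.of R G h

variable {R}

theorem of_mul_signedSum (χ : G →* ℤˣ) {H : Subgroup G} {g : G} (hg : g ∈ H) :
    MonoidAlgebra.of R G g * signedSum R χ H = χ g • signedSum R χ H := by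
  rw [signedSum, Finset.mul_sum, Finset.smul_sum]
  refine Finset.sum_equiv (Equiv.mulLeft g) (fun h => ?_) fun h _ => ?_
  · simp [H.mul_mem_cancel_left hg]
  · simp [smul_smul, ← mul_assoc, Int.units_mul_self, mul_smul_comm]

theorem commute_of_signedSum (χ : G →* ℤˣ) {H : Subgroup G} {g : G}
    (hg : ∀ h ∈ H, Commute g h) : Commute (MonoidAlgebra.of R G g) (signedSum R χ H) :=
  Commute.sum_right _ _ _ fun h hh =>
    ((hg h (by simpa using hh)).map (MonoidAlgebra.of R G)).smul_right _

end SignedSum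

section HookElement

variable (R : Type*) [Ring R] {α : Type*} [Fintype α] [DecidableEq α] (s : Finset α) (b : α)

/-- The element `y`: the symmetrizer of the letters outside `s` times the antisymmetrizer of the
letters in `s`. -/
def hookElt : MonoidAlgebra R (Perm α) :=
  signedSum R 1 (fixingSubgroup (Perm α) (s : Set α)) *
    signedSum R Perm.sign (fixingSubgroup (Perm α) (sᶜ : Set α))

/-- The element `z = (1 + ∑_{i ∉ s} (i b)) * y`, of the kind appearing in Garnir's relations.
For `b ∈ s` it is the sum of `g * y` over coset representatives `g` for the permutations of
`sᶜ` in those of `sᶜ ∪ {b}`. -/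
def garnirElt : MonoidAlgebra R (Perm α) :=
  (1 + ∑ i ∈ sᶜ, MonoidAlgebra.of R (Perm α) (swap i b)) * hookElt R s

variable {R s b}

theorem of_mul_hookElt_of_mem_fixingSubgroup {σ : Perm α}
    (hσ : σ ∈ fixingSubgroup (Perm α) (s : Set α)) :
    MonoidAlgebra.of R (Perm α) σ * hookElt R s = hookElt R s := by
  rw [hookElt, ← mul_assoc, of_mul_signedSum 1 hσ, MonoidHom.one_apply, one_smul]

theorem of_mul_hookElt_of_mem_fixingSubgroup_compl {τ : Perm α}
    (hτ : τ ∈ fixingSubgroup (Perm α) (sᶜ : Set α)) :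
    MonoidAlgebra.of R (Perm α) τ * hookElt R s = Perm.sign τ • hookElt R s := by
  have hcomm : ∀ σ ∈ fixingSubgroup (Perm α) (s : Set α), Commute τ σ := fun σ hσ =>
    Perm.Disjoint.commute fun i => (em (i ∈ s)).symm.imp ((mem_fixingSubgroup_iff _).1 hτ i)
      ((mem_fixingSubgroup_iff _).1 hσ i)
  rw [hookElt, ← mul_assoc, (commute_of_signedSum 1 hcomm).eq, mul_assoc,
    of_mul_signedSum _ hτ, mul_smul_comm]

theorem exists_of_mul_hookElt_eq_smul {g : Perm α} (hg : g • s = s) :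
    ∃ ε : ℤˣ, MonoidAlgebra.of R (Perm α) g * hookElt R s = ε • hookElt R s := by
  have hmem (i : α) : g i ∈ s ↔ i ∈ s := by
    conv_lhs => rw [← hg, ← Perm.smul_def, Finset.smul_mem_smul_finset_iff]
  let τ : Perm α := Perm.ofSubtype (g.subtypePerm hmem)
  have hτ : τ ∈ fixingSubgroup (Perm α) (sᶜ : Set α) :=
    (mem_fixingSubgroup_iff _).2 fun i hi => Perm.ofSubtype_apply_of_not_mem _ hi
  have hσ : g * τ⁻¹ ∈ fixingSubgroup (Perm α) (s : Set α) := by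
    rw [mem_fixingSubgroup_iff, τ.surjective.forall]
    intro i hi
    have his : i ∈ s := by
      by_contra h
      exact h (((mem_fixingSubgroup_iff _).1 hτ i h : τ i = i) ▸ hi)
    simpa using (Perm.ofSubtype_apply_of_mem (g.subtypePerm hmem) his).symm
  refine ⟨Perm.sign τ, ?_⟩
  rw [← inv_mul_cancel_right g τ, map_mul, mul_assoc, of_mul_hookElt_of_mem_fixingSubgroup_compl hτ,
    mul_smul_comm, of_mul_hookElt_of_mem_fixingSubgroup hσ]

theorem of_mul_hookElt_mem_span_singleton {g g' : Perm α} (h : g • s = g' • s) :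
    MonoidAlgebra.of R (Perm α) g * hookElt R s ∈
      Submodule.span R {MonoidAlgebra.of R (Perm α) g' * hookElt R s} := by
  obtain ⟨ε, hε⟩ := exists_of_mul_hookElt_eq_smul (R := R) (s := s) (g := g'⁻¹ * g)
    (by rw [mul_smul, h, inv_smul_smul])
  rw [← mul_inv_cancel_left g' g, map_mul, mul_assoc, hε, mul_smul_comm, Units.smul_def]
  exact zsmul_mem (Submodule.mem_span_singleton_self _) _

theorem garnirElt_mem_span : garnirElt R s b ∈ Ideal.span {hookElt R s} :=
  Ideal.mul_mem_left _ _ (Ideal.mem_span_singleton_self _)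

theorem garnirElt_eq_sum (hb : b ∈ s) :
    garnirElt R s b =
      ∑ i ∈ (s.erase b)ᶜ, MonoidAlgebra.of R (Perm α) (swap i b) * hookElt R s := by
  rw [garnirElt, ← Finset.sum_mul, Finset.compl_erase, Finset.sum_insert (by simpa using hb),
    Equiv.swap_self, ← Perm.one_def, map_one]

theorem of_mul_hookElt_eq_of_swap_mul_hookElt (hb : b ∈ s) {σ : Perm α}
    (hσ : σ ∈ fixingSubgroup (Perm α) (s.erase b : Set α)) :
    MonoidAlgebra.of R (Perm α) σ * hookElt R s =
      MonoidAlgebra.of R (Perm α) (swap (σ b) b) * hookElt R s := by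
  have hfix : swap (σ b) b * σ ∈ fixingSubgroup (Perm α) (s : Set α) := by
    refine (mem_fixingSubgroup_iff _).2 fun i hi => ?_
    rcases eq_or_ne i b with rfl | hib
    · simp
    have hσi : σ i = i :=
      (mem_fixingSubgroup_iff _).1 hσ i (Finset.mem_coe.2 (Finset.mem_erase.2 ⟨hib, hi⟩))
    rw [Perm.smul_def, Perm.mul_apply, hσi,
      Equiv.swap_apply_of_ne_of_ne (hσi.symm.trans_ne (σ.injective.ne hib)) hib]
  conv_lhs => rw [← Equiv.swap_mul_self_mul (σ b) b σ, map_mul, mul_assoc,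
    of_mul_hookElt_of_mem_fixingSubgroup hfix]

theorem of_mul_garnirElt (hb : b ∈ s) {σ : Perm α}
    (hσ : σ ∈ fixingSubgroup (Perm α) (s.erase b : Set α)) :
    MonoidAlgebra.of R (Perm α) σ * garnirElt R s b = garnirElt R s b := by
  have hmem (i : α) : σ i ∈ s.erase b ↔ i ∈ s.erase b := by
    have hfix := (mem_fixingSubgroup_iff _).1 hσ
    exact ⟨fun hi => σ.injective (hfix (σ i) hi) ▸ hi,
      fun hi => by rwa [← Perm.smul_def, hfix i hi]⟩
  rw [garnirElt_eq_sum hb, Finset.mul_sum]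
  refine Finset.sum_equiv σ (fun i => by simp only [Finset.mem_compl, hmem]) fun i hi => ?_
  have hswap : swap i b ∈ fixingSubgroup (Perm α) (s.erase b : Set α) :=
    (mem_fixingSubgroup_iff _).2 fun j hj => Equiv.swap_apply_of_ne_of_ne
      (fun h => Finset.mem_compl.1 hi (h ▸ hj)) (Finset.ne_of_mem_erase hj)
  rw [← mul_assoc, ← map_mul, of_mul_hookElt_eq_of_swap_mul_hookElt hb (mul_mem hσ hswap),
    Perm.mul_apply, Equiv.swap_apply_right]

theorem of_mul_hookElt_mem_span_sup_span_garnirElt (hb : b ∈ s) (c : α) (g : Perm α) :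
    MonoidAlgebra.of R (Perm α) g * hookElt R s ∈
      Submodule.span R ((fun g => MonoidAlgebra.of R (Perm α) g * hookElt R s) '' {g | c ∉ g • s}) ⊔
        (Ideal.span {garnirElt R s b}).restrictScalars R := by
  by_cases hc : c ∈ g • s
  swap
  · exact Submodule.mem_sup_left (Submodule.subset_span ⟨g, hc, rfl⟩)
  obtain ⟨d, hd, rfl⟩ := Finset.mem_smul_finset.1 hc
  let g' := g * swap d b
  have hg' : g • s = g' • s := by
    have hswap : swap d b • s = s := by
      rw [← Finset.coe_inj, Finset.coe_smul_finset]
      exact MulAction.mem_stabilizer_iff.1 (Equiv.swap_mem_stabilizer.2 (iff_of_true hd hb))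
    rw [mul_smul, hswap]
  refine Submodule.span_singleton_le_iff_mem _ _ |>.2 ?_ (of_mul_hookElt_mem_span_singleton hg')
  have hstraighten : MonoidAlgebra.of R (Perm α) g' * hookElt R s =
      MonoidAlgebra.of R (Perm α) g' * garnirElt R s b -
        ∑ i ∈ sᶜ, MonoidAlgebra.of R (Perm α) (g' * swap i b) * hookElt R s := by
    simp only [garnirElt, map_mul, mul_assoc, add_mul, mul_add, one_mul, Finset.sum_mul,
      Finset.mul_sum, add_sub_cancel_right]
  rw [hstraighten]
  refine sub_mem
    (Submodule.mem_sup_right (Ideal.mul_mem_left _ _ (Ideal.mem_span_singleton_self _)))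
    (Submodule.mem_sup_left (sum_mem fun i hi => Submodule.subset_span ⟨_, ?_, rfl⟩))
  have hgi : g d = (g' * swap i b) i := by simp [g']
  rw [Set.mem_ofPred_eq, Perm.smul_def, hgi, ← Perm.smul_def, Finset.smul_mem_smul_finset_iff]
  exact Finset.mem_compl.1 hi

theorem span_hookElt_le_span_sup_span_garnirElt (hb : b ∈ s) (c : α) :
    (Ideal.span {hookElt R s}).restrictScalars R ≤
      Submodule.span R ((fun g => MonoidAlgebra.of R (Perm α) g * hookElt R s) '' {g | c ∉ g • s}) ⊔
        (Ideal.span {garnirElt R s b}).restrictScalars R := by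
  intro x hx
  obtain ⟨a, rfl⟩ := Ideal.mem_span_singleton'.1 hx
  clear hx
  induction a using MonoidAlgebra.induction_on with
  | of g => exact of_mul_hookElt_mem_span_sup_span_garnirElt hb c g
  | add a a' ha ha' =>
    rw [add_mul]
    exact add_mem ha ha'
  | smul r a ha =>
    rw [smul_mul_assoc]
    exact Submodule.smul_mem _ r ha

theorem finrank_span_hookElt_le {K : Type*} [DivisionRing K] (hb : b ∈ s) :
    Module.finrank K (Ideal.span {hookElt K s}) ≤
      (Fintype.card α - 1).choose #s + Module.finrank K (Ideal.span {garnirElt K s b}) := by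
  let N := Submodule.span K
    ((fun g => MonoidAlgebra.of K (Perm α) g * hookElt K s) '' {g | b ∉ g • s})
  have hN : Module.finrank K N ≤ (Fintype.card α - 1).choose #s := by
    rw [← Finset.card_univ, ← Finset.card_erase_of_mem (Finset.mem_univ b),
      ← Finset.card_powersetCard]
    refine finrank_span_image_le_card _ (fun g : Perm α => g • s) ?_
      fun g _ g' _ => of_mul_hookElt_mem_span_singleton
    intro g hg
    simpa [Finset.mem_powersetCard, Finset.subset_erase] using hg
  calc Module.finrank K (Ideal.span {hookElt K s})
      ≤ Module.finrank K ↥(N ⊔ (Ideal.span {garnirElt K s b}).restrictScalars K) :=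
        Submodule.finrank_mono (span_hookElt_le_span_sup_span_garnirElt hb b)
    _ ≤ Module.finrank K N + Module.finrank K (Ideal.span {garnirElt K s b}) :=
        Submodule.finrank_add_le_finrank_add_finrank _ _
    _ ≤ _ := Nat.add_le_add_right hN _

end HookElement

section HookModule

variable {K α : Type*} [Field K] [CharZero K] [Fintype α] [DecidableEq α] {s : Finset α} {b : α}

theorem map_garnirElt_eq_zero (hb : b ∈ s)
    (f : Ideal.span {hookElt K s} →ₗ[K] ExteriorAlgebra K (sumZero K α))
    (hf : ∀ g x (hx : x ∈ Ideal.span {hookElt K s}),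
      f ⟨MonoidAlgebra.of K (Perm α) g * x, Ideal.mul_mem_left _ _ hx⟩ =
        exteriorRep (stdRep K α) g (f ⟨x, hx⟩))
    (hmem : f ⟨garnirElt K s b, garnirElt_mem_span⟩ ∈ ⋀[K]^#s (sumZero K α)) :
    f ⟨garnirElt K s b, garnirElt_mem_span⟩ = 0 := by
  refine Submodule.disjoint_def.1 (disjoint_invariants_exteriorPower (Finset.notMem_erase b s)
    (Finset.card_erase_lt_of_mem hb)) _ (fun σ => ?_) hmem
  refine (hf σ _ garnirElt_mem_span).symm.trans (congrArg f (Subtype.ext ?_))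
  exact of_mul_garnirElt hb σ.2

theorem stmt7_general (hb : b ∈ s) {k : ℕ} (hk : #s = k) {y z : MonoidAlgebra K (Perm α)}
    (hy : y = hookElt K s) (hz : z = garnirElt K s b)
    (φ : Ideal.span {y} →ₗ[K] ⋀[K]^k (sumZero K α))
    (hφ : ∀ g x (hx : x ∈ Ideal.span {y}),
      (φ ⟨MonoidAlgebra.of K (Perm α) g * x, Ideal.mul_mem_left _ _ hx⟩ :
          ExteriorAlgebra K (sumZero K α)) =
        exteriorRep (stdRep K α) g (φ ⟨x, hx⟩)) :
    φ ⟨z, by rw [hz, hy]; exact garnirElt_mem_span⟩ = 0 ∧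
      (Function.Surjective φ →
        ∀ x (hx : x ∈ Ideal.span {y}), φ ⟨x, hx⟩ = 0 ↔ x ∈ Ideal.span {z}) := by
  subst hk hy hz
  let f := (⋀[K]^#s (sumZero K α)).subtype ∘ₗ φ
  have hfz : f ⟨garnirElt K s b, garnirElt_mem_span⟩ = 0 :=
    map_garnirElt_eq_zero hb f hφ (Submodule.coe_mem _)
  have hle : Ideal.span {garnirElt K s b} ≤ Ideal.span {hookElt K s} :=
    (Ideal.span_singleton_le_iff_mem _).2 garnirElt_mem_span
  let N := ((Ideal.span {garnirElt K s b}).restrictScalars K).comap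
    ((Ideal.span {hookElt K s}).restrictScalars K).subtype
  have hN : N ≤ LinearMap.ker φ := by
    rintro ⟨x, hx⟩ hxN
    obtain ⟨a, rfl⟩ := Ideal.mem_span_singleton'.1 hxN
    refine Subtype.ext ((map_mul_eq_asAlgebraHom f _ hφ a garnirElt_mem_span).trans ?_)
    rw [hfz, map_zero, ZeroMemClass.coe_zero]
  refine ⟨Subtype.ext hfz, fun hsurj x hx => ?_⟩
  have : Nonempty α := ⟨b⟩
  have hdim : Module.finrank K (Ideal.span {hookElt K s}) ≤
      Module.finrank K (⋀[K]^#s (sumZero K α)) + Module.finrank K N := by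
    rw [exteriorPower.finrank_eq, finrank_sumZero,
      (Submodule.comapSubtypeEquivOfLe (p := (Ideal.span {garnirElt K s b}).restrictScalars K)
        (q := (Ideal.span {hookElt K s}).restrictScalars K) hle).finrank_eq]
    exact finrank_span_hookElt_le hb
  rw [← LinearMap.mem_ker, ← eq_ker_of_surjective_of_finrank_le hsurj hN hdim]
  rfl

end HookModule

section Statement

variable {t j : ℕ}

theorem yElt_eq_hookElt (h : t < t + 2 * j) :
    yElt t j = hookElt ℚ (Finset.Ici (⟨t, h⟩ : Fin (t + 2 * j))) := by
  refine congrArg₂ (· * ·) (Finset.sum_congr ?_ ?_) (Finset.sum_congr ?_ ?_)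
  · ext σ
    simp [mem_fixingSubgroup_iff, Fin.le_def]
  · intro σ _
    rw [MonoidHom.one_apply, one_smul]
  · ext τ
    simp [mem_fixingSubgroup_iff, Fin.lt_def]
  · intro τ _
    rw [Units.smul_def, Int.cast_smul_eq_zsmul]

theorem zElt_eq_garnirElt (hj : 1 ≤ j) (h : t < t + 2 * j) :
    zElt t j hj = garnirElt ℚ (Finset.Ici (⟨t, h⟩ : Fin (t + 2 * j))) ⟨t, h⟩ := by
  have hcompl : (Finset.Ici (⟨t, h⟩ : Fin (t + 2 * j)))ᶜ =
      Finset.univ.map (Fin.castLEEmb h.le) := by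
    ext i
    simp only [Finset.mem_compl, Finset.mem_Ici, not_le, Finset.mem_map, Finset.mem_univ, true_and]
    exact ⟨fun hi => ⟨⟨i, hi⟩, rfl⟩, fun ⟨i', hi⟩ => hi ▸ i'.isLt⟩
  rw [zElt, yElt_eq_hookElt h, garnirElt, hcompl, Finset.sum_map]
  rfl

end Statement

end

/-- For `t ≥ 2`, `j ≥ 1`, `G = S_{t+2j}` and
`z = (1 + (1 t+1) + ⋯ + (t t+1))·y ∈ ℚ[G]`: every homomorphism of left `ℚ[G]`-modules
`φ : ℚ[G]·y → Λ^{2j} U_{t+2j}` (i.e. `ℚ`-linear and `G`-equivariant) satisfies `φ(z) = 0`;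
moreover if `φ` is surjective then `ker φ = ℚ[G]·z`. -/
theorem stmt7 (t j : ℕ) (ht : 2 ≤ t) (hj : 1 ≤ j)
    (φ : ↥(Ideal.span {yElt t j}) →ₗ[ℚ] ↥(⋀[ℚ]^(2*j) ↥(U (t + 2*j))))
    (hφ : ∀ (g : Equiv.Perm (Fin (t + 2*j))) (x : MonoidAlgebra ℚ (Equiv.Perm (Fin (t + 2*j))))
        (hx : x ∈ Ideal.span {yElt t j}),
        ((φ ⟨MonoidAlgebra.of ℚ _ g * x, Ideal.mul_mem_left _ _ hx⟩ :
            ↥(⋀[ℚ]^(2*j) ↥(U (t + 2*j)))) : ExteriorAlgebra ℚ ↥(U (t + 2*j)))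
          = act (t + 2*j) g ((φ ⟨x, hx⟩ : ↥(⋀[ℚ]^(2*j) ↥(U (t + 2*j)))) :
              ExteriorAlgebra ℚ ↥(U (t + 2*j)))) :
    φ ⟨zElt t j hj, by
        unfold zElt; exact Ideal.mul_mem_left _ _ (Ideal.subset_span rfl)⟩ = 0 ∧
    (Function.Surjective φ →
      ∀ (x : MonoidAlgebra ℚ (Equiv.Perm (Fin (t + 2*j)))) (hx : x ∈ Ideal.span {yElt t j}),
        (φ ⟨x, hx⟩ = 0 ↔ x ∈ Ideal.span {zElt t j hj})) := by
  have h : t < t + 2 * j := by omega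
  exact stmt7_general (Finset.mem_Ici.2 le_rfl) (by simp) (yElt_eq_hookElt h)
    (zElt_eq_garnirElt hj h) φ hφ

end
end
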